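/- arXiv:2309.11788 — 5 statements merged into one kernel-verified Lean document; each statement's English description precedes it below -/
import Mathlib

section
/- For every Motzkin parking function p of length n, there exists a unique rearrangement p' of p (same multiset of entries) such that O_MVP(p') is the decreasing permutation dec_n = n(n−1)⋯1. In particular, Φ restricted to the fibre Fib_n(dec_n) is a bijection onto the set Motz_n of Motzkin paths of length n. -/
/- Common definitions: the classical and MVP parking processes, parking
functions, inversion graphs and 1-subgraphs, Motzkin paths, and sandpile
configurations on complete graphs. Spots, cars and vertices are 0-indexed
(element `i : Fin n` corresponds to the 1-indexed `i+1` of the paper). -/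

namespace MVPPaper

open Finset

variable {n : ℕ}

/-- The first unoccupied spot `k ≥ s` in the occupancy `occ`, if any exists.
`occ k = some i` means spot `k` is occupied by car `i`. -/
def firstFree (occ : Fin n → Option (Fin n)) (s : Fin n) : Option (Fin n) :=
  (List.finRange n).find? fun k => decide (s ≤ k) && (occ k).isNone

/-- One step of the classical parking process: car `i`, preferring spot `s`,
parks in the first free spot `k ≥ s` (failure if none exists). -/
def classicalStep (occ : Fin n → Option (Fin n)) (i s : Fin n) :
    Option (Fin n → Option (Fin n)) :=
  (firstFree occ s).map fun k => Function.update occ k (some i)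

/-- One step of the MVP parking process: car `i` parks in its preferred spot
`s`; if `s` was occupied by an earlier car `j`, then `j` is bumped out and
drives on to the first free spot `k ≥ s` (failure if none exists). -/
def mvpStep (occ : Fin n → Option (Fin n)) (i s : Fin n) :
    Option (Fin n → Option (Fin n)) :=
  match occ s with
  | none => some (Function.update occ s (some i))
  | some j =>
      (firstFree (Function.update occ s (some i)) s).map fun k =>
        Function.update (Function.update occ s (some i)) k (some j)

/-- Run a parking process: cars `0, 1, …, n-1` enter in order, with car `i`
preferring spot `p i`. Returns the final occupancy, or `none` on failure. -/
def runProcess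
    (step : (Fin n → Option (Fin n)) → Fin n → Fin n → Option (Fin n → Option (Fin n)))
    (p : Fin n → Fin n) : Option (Fin n → Option (Fin n)) :=
  List.foldlM (fun occ i => step occ i (p i)) (fun _ => none) (List.finRange n)

def mvpRun (p : Fin n → Fin n) : Option (Fin n → Option (Fin n)) :=
  runProcess mvpStep p

def classicalRun (p : Fin n → Fin n) : Option (Fin n → Option (Fin n)) :=
  runProcess classicalStep p

/-- All cars park successfully under the MVP process. -/
def IsMVPParking (p : Fin n → Fin n) : Prop := (mvpRun p).isSome

/-- All cars park successfully under the classical process. -/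
def IsClassicalParking (p : Fin n → Fin n) : Prop := (classicalRun p).isSome

/-- `MVPOutcome p π` means that the MVP parking process for `p` succeeds, and
car `π i` finally occupies spot `i` for all `i`; that is, `O_MVP(p) = π`. -/
def MVPOutcome (p : Fin n → Fin n) (π : Equiv.Perm (Fin n)) : Prop :=
  ∃ occ, mvpRun p = some occ ∧ ∀ i, occ i = some (π i)

/-- `p` is a parking function: for every `k`, at least `k+1` cars prefer a spot
`≤ k` (the classical counting characterisation, 0-indexed). -/
def IsParkingFunction (p : Fin n → Fin n) : Prop :=
  ∀ k : Fin n, (k : ℕ) + 1 ≤ (univ.filter fun i => p i ≤ k).card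

/-- The fibre of the MVP outcome map over `π`: parking functions with MVP
outcome `π`. -/
def FibMVP (π : Equiv.Perm (Fin n)) : Set (Fin n → Fin n) :=
  {p | IsParkingFunction p ∧ MVPOutcome p π}

/-- The set of inversions of `π` (where `π i` is the car occupying spot `i`):
pairs `(j, i)` with `j < i` and `π j > π i`. These are the edges of the
inversion graph `G_π`. -/
def invFinset (π : Equiv.Perm (Fin n)) : Finset (Fin n × Fin n) :=
  univ.filter fun e => e.1 < e.2 ∧ π e.2 < π e.1

/-- The left-inversions of `π` at `i`. -/
def lInv (π : Equiv.Perm (Fin n)) (i : Fin n) : Finset (Fin n) :=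
  univ.filter fun j => j < i ∧ π i < π j

/-- A 1-subgraph of the inversion graph of `π`: a set of inversions with at
most one incident left-arc at each vertex. -/
def IsOneSubgraph (π : Equiv.Perm (Fin n)) (S : Finset (Fin n × Fin n)) : Prop :=
  S ⊆ invFinset π ∧ ∀ i j j' : Fin n, (j, i) ∈ S → (j', i) ∈ S → j = j'

/-- The map `Ψ_{Sub→PF}`: the parking preference `p` where `p (π i) = j` if
`(j, i) ∈ S` (for the unique such `j`), and `p (π i) = i` otherwise. -/
noncomputable def subToPF (π : Equiv.Perm (Fin n)) (S : Finset (Fin n × Fin n)) :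
    Fin n → Fin n := fun c =>
  if h : ∃ j, (j, π.symm c) ∈ S then h.choose else π.symm c

/-- The map `Ψ_{PF→Sub}`: the set of inversions `(j, i)` of `π` with
`p (π i) = j`. -/
def pfToSub (π : Equiv.Perm (Fin n)) (p : Fin n → Fin n) : Finset (Fin n × Fin n) :=
  (invFinset π).filter fun e => p (π e.2) = e.1

/-- A 1-subgraph `S` is valid if the MVP outcome of `Ψ_{Sub→PF}(S)` is `π`. -/
def IsValid (π : Equiv.Perm (Fin n)) (S : Finset (Fin n × Fin n)) : Prop :=
  MVPOutcome (subToPF π S) π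

/-- `π` contains the pattern `321`. -/
def Contains321 (π : Equiv.Perm (Fin n)) : Prop :=
  ∃ i j k : Fin n, i < j ∧ j < k ∧ π k < π j ∧ π j < π i

/-- `π` contains the pattern `3412`. -/
def Contains3412 (π : Equiv.Perm (Fin n)) : Prop :=
  ∃ i j k l : Fin n, i < j ∧ j < k ∧ k < l ∧ π k < π l ∧ π l < π i ∧ π i < π j

/-- `S` is `P⃗₂`-free: there is no triple `i < j < k` with `(i,j) ∈ S` and
`(j,k) ∈ S`. -/
def P2Free (S : Finset (Fin n × Fin n)) : Prop :=
  ¬∃ i j k : Fin n, i < j ∧ j < k ∧ (i, j) ∈ S ∧ (j, k) ∈ S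

/-- `S` is horizontally separated (HS): any two distinct edges `(j,i)` and
`(j',i')` of `S` satisfy `i < j'` or `i' < j`. -/
def IsHS (S : Finset (Fin n × Fin n)) : Prop :=
  ∀ e ∈ S, ∀ e' ∈ S, e ≠ e' → e.2 < e'.1 ∨ e'.2 < e.1

/-- Steps of a Motzkin path: up, horizontal, down. -/
inductive MStep : Type
  | U : MStep
  | H : MStep
  | D : MStep
  deriving DecidableEq

/-- The height change of a step. -/
def stepVal : MStep → ℤ
  | MStep.U => 1
  | MStep.H => 0
  | MStep.D => -1

/-- The number of cars preferring spot `j` in `p`. -/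
def prefCount (p : Fin n → Fin n) (j : Fin n) : ℕ :=
  (univ.filter fun i => p i = j).card

/-- The lattice path `Φ(p)`: step `j` is `U`, `H` or `D` according to whether
spot `j` is preferred by at least two, exactly one, or no cars. -/
def Phi (p : Fin n → Fin n) : Fin n → MStep := fun j =>
  if 2 ≤ prefCount p j then MStep.U
  else if prefCount p j = 1 then MStep.H
  else MStep.D

/-- An `n`-step lattice path is a Motzkin path: it ends at height `0` and no
prefix goes below height `0`. -/
def IsMotzkinPath (φ : Fin n → MStep) : Prop :=
  (∑ j : Fin n, stepVal (φ j)) = 0 ∧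
  ∀ k : Fin n, 0 ≤ ∑ j ∈ univ.filter (fun j : Fin n => j ≤ k), stepVal (φ j)

/-- The decreasing permutation `dec_n = n(n-1)⋯1`: spot `i` gets car `n-1-i`
(0-indexed). -/
def decPerm (n : ℕ) : Equiv.Perm (Fin n) :=
  ⟨Fin.rev, Fin.rev, Fin.rev_rev, Fin.rev_rev⟩

/-- A non-crossing matching arc diagram on `{0, …, n-1}`: arcs go left to
right, each vertex is incident to at most one arc, and no two arcs cross. -/
def IsNonCrossMatching (S : Finset (Fin n × Fin n)) : Prop :=
  (∀ e ∈ S, e.1 < e.2) ∧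
  (∀ e ∈ S, ∀ e' ∈ S, e ≠ e' →
    e.1 ≠ e'.1 ∧ e.1 ≠ e'.2 ∧ e.2 ≠ e'.1 ∧ e.2 ≠ e'.2) ∧
  ¬∃ i j k l : Fin n, i < j ∧ j < k ∧ k < l ∧ (i, k) ∈ S ∧ (j, l) ∈ S

/-- A stable configuration `c` (grain counts, each `< n`) on the complete graph
`K_n` is recurrent; by Dhar's burning criterion this amounts on `K_n` to the
existence of an ordering `v` of the vertices with `c (v k) ≥ n - (k+1)` for
every `k` (0-indexed). -/
def IsRecurrentK (c : Fin n → ℕ) : Prop :=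
  (∀ i, c i < n) ∧ ∃ v : Equiv.Perm (Fin n), ∀ k : Fin n, n ≤ c (v k) + (k : ℕ) + 1

/-! Helper material. -/

theorem firstFree_iff (occ : Fin n → Option (Fin n)) (s k : Fin n) :
    firstFree occ s = some k ↔ s ≤ k ∧ occ k = none ∧ ∀ j, s ≤ j → j < k → occ j ≠ none := by
  have hs : ∀ k, firstFree occ s = some k →
      s ≤ k ∧ occ k = none ∧ ∀ j, s ≤ j → j < k → occ j ≠ none := by
    intro k h
    unfold firstFree at h
    rw [List.find?_eq_some_iff_getElem] at h
    obtain ⟨h1, i, hi, h2, h3⟩ := h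
    simp at h1 h2
    refine ⟨h1.1, h1.2, ?_⟩
    intro j hj hjk hn
    have hlt : (j : ℕ) < i := by
      have : (k : ℕ) = i := by rw [← h2]
      have := Fin.lt_def.1 hjk
      omega
    have := h3 j hlt
    simp at this
    rcases this with h | h
    · exact absurd h (not_lt.2 hj)
    · simp [hn] at h
  refine ⟨hs k, ?_⟩
  rintro ⟨h1, h2, h3⟩
  cases hf : firstFree occ s with
  | none =>
    unfold firstFree at hf
    rw [List.find?_eq_none] at hf
    have := hf k (List.mem_finRange k)
    simp [h1, h2] at this
  | some k' =>
    obtain ⟨g1, g2, g3⟩ := hs k' hf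
    rcases lt_trichotomy k k' with h | h | h
    · exact absurd h2 (g3 k h1 h)
    · rw [h]
    · exact absurd g2 (h3 k' g1 h)

/-- prefix runs -/
def preRun (p : Fin n → Fin n) (t : ℕ) : Option (Fin n → Option (Fin n)) :=
  List.foldlM (fun occ i => mvpStep occ i (p i)) (fun _ => none) ((List.finRange n).take t)

theorem preRun_zero (p : Fin n → Fin n) : preRun p 0 = some (fun _ => none) := by
  simp [preRun]

theorem preRun_full (p : Fin n → Fin n) : preRun p n = mvpRun p := by
  unfold preRun mvpRun runProcess
  rw [List.take_of_length_le (by simp)]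

theorem preRun_succ (p : Fin n → Fin n) (t : ℕ) (h : t < n) :
    preRun p (t + 1) = (preRun p t).bind fun S => mvpStep S ⟨t, h⟩ (p ⟨t, h⟩) := by
  unfold preRun
  rw [List.take_succ_eq_append_getElem (by simpa using h), List.foldlM_append]
  simp

/-- the validity conditions, in terms of `q s = p (rev s)`. -/
structure Good (q : Fin n → Fin n) : Prop where
  le : ∀ s, q s ≤ s
  idem : ∀ s, q (q s) = q s
  inj : ∀ s s', q s < s → q s' < s' → q s = q s' → s = s'
  nc : ∀ s s', q s < s → q s' < s' → q s < q s' → q s' < s → s' < s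

/-- invariant of states: `m` spots on the left not final. -/
structure Inv (m : ℕ) (S : Fin n → Option (Fin n)) : Prop where
  a : ∀ s y : Fin n, m ≤ (s : ℕ) → S s = some (Fin.rev y) → y = s
  b : ∀ x y : Fin n, (x : ℕ) < m → S x = some (Fin.rev y) → m ≤ (y : ℕ) ∧ S y = none
  c : ∀ s : Fin n, m ≤ (s : ℕ) → S s = none → ∃ x : Fin n, (x : ℕ) < m ∧ S x = some (Fin.rev s)
  d : ∀ x x' s s' : Fin n, x < x' → (x' : ℕ) < m → S x = some (Fin.rev s) →
    S x' = some (Fin.rev s') → s' < s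
  e : ∀ x x' y : Fin n, S x = some y → S x' = some y → x = x'

theorem mvpStep_cases (S S' : Fin n → Option (Fin n)) (i v : Fin n) (h : mvpStep S i v = some S') :
    (S v = none ∧ S' = Function.update S v (some i)) ∨
    (∃ j k, S v = some j ∧ v < k ∧ S k = none ∧ (∀ w, v < w → w < k → S w ≠ none) ∧
      S' = Function.update (Function.update S v (some i)) k (some j)) := by
  unfold mvpStep at h
  cases hv : S v with
  | none => left; simp [hv] at h; exact ⟨rfl, h.symm⟩
  | some j =>
    right
    simp only [hv, Option.map_eq_some_iff] at h
    obtain ⟨k, hk, rfl⟩ := h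
    rw [firstFree_iff] at hk
    obtain ⟨h1, h2, h3⟩ := hk
    have hne : k ≠ v := by rintro rfl; simp at h2
    refine ⟨j, k, rfl, lt_of_le_of_ne h1 hne.symm, ?_, ?_, rfl⟩
    · simpa [Function.update_of_ne hne] using h2
    · intro w hw hwk
      have := h3 w hw.le hwk
      simpa [Function.update_of_ne hw.ne'] using this

theorem mvpStep_bump (S : Fin n → Option (Fin n)) (i v j k : Fin n) (hv : S v = some j)
    (hk : v < k) (hn : S k = none) (hb : ∀ w, v < w → w < k → S w ≠ none) :
    mvpStep S i v = some (Function.update (Function.update S v (some i)) k (some j)) := by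
  unfold mvpStep
  have : firstFree (Function.update S v (some i)) v = some k := by
    rw [firstFree_iff]
    refine ⟨hk.le, by simpa [Function.update_of_ne hk.ne'] using hn, ?_⟩
    intro w hw hwk
    rcases hw.eq_or_lt with rfl | h
    · simp
    · simpa [Function.update_of_ne h.ne'] using hb w h hwk
  simp [hv, this]

theorem inv_back (r v : Fin n) (S S' : Fin n → Option (Fin n))
    (hS : ∀ x c, S x = some c → c < Fin.rev r)
    (he : ∀ x x' y : Fin n, S x = some y → S x' = some y → x = x')
    (hI : Inv (r : ℕ) S') (h : mvpStep S (Fin.rev r) v = some S') :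
    Inv (r + 1 : ℕ) S ∧ ((v = r ∧ S' r = some (Fin.rev r) ∧ ∀ x, x < r → S x = S' x) ∨
      (v < r ∧ S v = none ∧ S' r = none ∧ S' = Function.update S v (some (Fin.rev r)))) := by
  rcases mvpStep_cases S S' _ _ h with ⟨h1, h2⟩ | ⟨j, k, h1, hvk, hk, hb, h2⟩
  · have e1 : S' v = some (Fin.rev r) := by simp [h2]
    have e2 : ∀ x, x ≠ v → S' x = S x := by intro x hx; simp [h2, hx]
    obtain ⟨a, b, c, d, e⟩ := hI
    by_cases hvr : v = r
    · subst hvr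
      refine ⟨⟨?_, ?_, ?_, ?_, he⟩, Or.inl ⟨rfl, e1, fun x hx => (e2 x hx.ne).symm⟩⟩
      · intro s y hs hy
        grind
      · intro x y hx hy
        have hxv : x ≠ v := by grind
        have := b x y (by grind) (by grind)
        have hyv : y ≠ v := by grind
        grind
      · intro s hs hn
        obtain ⟨x, hx, hx'⟩ := c s (by omega) (by grind)
        exact ⟨x, by omega, by grind⟩
      · intro x x' s s' hx hx' h3 h4
        exact d x x' s s' hx (by grind) (by grind) (by grind)
    · have hvlt : v < r := by
        by_contra hge
        exact hvr (a v r (by grind) e1).symm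
      have hb0 := b v r hvlt e1
      refine ⟨⟨?_, ?_, ?_, ?_, he⟩, Or.inr ⟨hvlt, h1, hb0.2, h2⟩⟩
      · intro s y hs hy
        grind
      · intro x y hx hy
        have hxv : x ≠ v := by grind
        have := b x y (by grind) (by grind)
        have hyv : y ≠ r := by grind
        grind
      · intro s hs hn
        obtain ⟨x, hx, hx'⟩ := c s (by omega) (by grind)
        refine ⟨x, by omega, ?_⟩
        have : x ≠ v := by
          rintro rfl
          rw [e1] at hx'
          have := Fin.rev_injective (Option.some.inj hx')
          grind
        grind
      · intro x x' s s' hx hx' h3 h4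
        exact d x x' s s' hx (by grind) (by grind) (by grind)
  · have e1 : S' v = some (Fin.rev r) := by simp [h2, hvk.ne]
    have e3 : S' k = some j := by simp [h2]
    have e2 : ∀ x, x ≠ v → x ≠ k → S' x = S x := by intro x hx hx'; simp [h2, hx, hx']
    obtain ⟨a, b, c, d, e⟩ := hI
    obtain ⟨j, rfl⟩ : ∃ y, j = Fin.rev y := ⟨Fin.rev j, by simp⟩
    have hvr : v = r := by
      by_contra hvr
      have hvlt : v < r := by
        by_contra hge
        exact hvr (a v r (by grind) e1).symm
      have hb0 := b v r hvlt e1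
      have hkr : k < r := by
        by_contra hge
        have : k ≠ r := by grind
        exact hb r hvlt (by grind) (by grind)
      have := d v k r j hvk hkr e1 e3
      have := b k j hkr e3
      grind
    subst hvr
    have hjk : j = k := a k j (by grind) e3
    subst hjk
    refine ⟨⟨?_, ?_, ?_, ?_, he⟩, Or.inl ⟨rfl, e1, fun x hx => (e2 x hx.ne (by grind)).symm⟩⟩
    · intro s y hs hy
      grind
    · intro x y hx hy
      by_cases hxv : x = v
      · subst hxv
        have : y = j := by
          rw [h1] at hy
          exact (Fin.rev_injective (Option.some.inj hy)).symm
        grind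
      · have := b x y (by grind) (by grind)
        have hyv : y ≠ v := by grind
        grind
    · intro s hs hn
      by_cases hsj : s = j
      · exact ⟨v, by omega, by rw [hsj, h1]⟩
      · obtain ⟨x, hx, hx'⟩ := c s (by omega) (by grind)
        exact ⟨x, by omega, by grind⟩
    · intro x x' s s' hx hx' h3 h4
      by_cases hxv : x' = v
      · subst hxv
        have : s' = j := by
          rw [h1] at h4
          exact (Fin.rev_injective (Option.some.inj h4)).symm
        subst this
        have hbx := b x s (by grind) (by grind)
        have : s ≠ x' := by grind
        have : s ≠ s' := by grind
        by_contra hlt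
        exact hb s (by grind) (by grind) (by grind)
      · exact d x x' s s' hx (by grind) (by grind) (by grind)

/-- forward invariants -/
theorem preRun_inv (p : Fin n → Fin n) (t : ℕ) : t ≤ n → ∀ S, preRun p t = some S →
    (∀ x c, S x = some c → (c : ℕ) < t) ∧
    (∀ x x' y : Fin n, S x = some y → S x' = some y → x = x') := by
  induction t with
  | zero =>
    intro _ S h
    rw [preRun_zero] at h
    cases h
    simp
  | succ t ih =>
    intro ht S' h
    rw [preRun_succ p t ht] at h
    rw [Option.bind_eq_some_iff] at h
    obtain ⟨S, hS, h⟩ := h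
    obtain ⟨i1, i2⟩ := ih (by omega) S hS
    have i3 : ∀ x, S x ≠ some ⟨t, ht⟩ := by
      intro x hx
      have := i1 x _ hx
      simp at this
    rcases mvpStep_cases S S' _ _ h with ⟨h1, h2⟩ | ⟨j, k, h1, hvk, hk, hb, h2⟩
    · subst h2
      constructor
      · intro x c hx
        simp only [Function.update_apply] at hx
        grind
      · intro x x' y hx hx'
        simp only [Function.update_apply] at hx hx'
        grind
    · subst h2
      constructor
      · intro x c hx
        simp only [Function.update_apply] at hx
        grind
      · intro x x' y hx hx'
        simp only [Function.update_apply] at hx hx'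
        grind

theorem good_of_outcome (p : Fin n → Fin n) (h : MVPOutcome p (decPerm n)) :
    Good (fun s => p (Fin.rev s)) := by
  obtain ⟨occ, hr, ho⟩ := h
  have ho' : ∀ i, occ i = some (Fin.rev i) := ho
  rw [← preRun_full] at hr
  -- states exist with the invariant
  have hst : ∀ m, m ≤ n → ∃ S, preRun p (n - m) = some S ∧ Inv m S := by
    intro m
    induction m with
    | zero =>
      intro _
      refine ⟨occ, hr, ?_, ?_, ?_, ?_, ?_⟩
      · intro s y _ h
        rw [ho'] at h
        exact (Fin.rev_injective (Option.some.inj h)).symm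
      · intro x y h; omega
      · intro s _ h; rw [ho'] at h; cases h
      · intro x x' s s' _ h; omega
      · intro x x' y h h'
        rw [ho'] at h h'
        exact Fin.rev_injective (Option.some.inj (h.trans h'.symm))
    | succ m ih =>
      intro hm
      obtain ⟨S', hS', hI⟩ := ih (by omega)
      have e : n - m = (n - (m + 1)) + 1 := by omega
      rw [e, preRun_succ p _ (by omega), Option.bind_eq_some_iff] at hS'
      obtain ⟨S, hS, hstep⟩ := hS'
      obtain ⟨f1, f2⟩ := preRun_inv p _ (by omega) S hS
      have e' : (⟨n - (m + 1), by omega⟩ : Fin n) = Fin.rev ⟨m, hm⟩ := by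
        ext; simp [Fin.val_rev]
      rw [e'] at hstep
      refine ⟨S, hS, (inv_back ⟨m, hm⟩ _ S S' ?_ f2 hI hstep).1⟩
      intro x c hx
      rw [← e']
      exact f1 x c hx
  choose! st hst1 hst2 using hst
  have hstep : ∀ r : Fin n,
      ((p (Fin.rev r) = r ∧ st r r = some (Fin.rev r) ∧ ∀ x, x < r → st (r + 1) x = st r x) ∨
      (p (Fin.rev r) < r ∧ st (r + 1) (p (Fin.rev r)) = none ∧ st r r = none ∧
        st r = Function.update (st (r + 1)) (p (Fin.rev r)) (some (Fin.rev r)))) := by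
    intro r
    have hm := r.2
    have hS' := hst1 r (by omega)
    have e : n - (r : ℕ) = (n - (r + 1)) + 1 := by omega
    rw [e, preRun_succ p _ (by omega), Option.bind_eq_some_iff] at hS'
    obtain ⟨S, hS, hstep⟩ := hS'
    obtain ⟨f1, f2⟩ := preRun_inv p _ (by omega) S hS
    have e' : (⟨n - (r + 1), by omega⟩ : Fin n) = Fin.rev r := by
      ext; simp [Fin.val_rev]
    rw [e'] at hstep
    have hSS : S = st (r + 1) := by
      have := hst1 (r + 1) (by omega)
      rw [hS] at this
      exact Option.some.inj this
    subst hSS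
    refine (inv_back r _ _ _ ?_ f2 (hst2 r (by omega)) hstep).2
    intro x c hx
    rw [← e']
    exact f1 x c hx
  -- persistence
  have pers1 : ∀ r x : Fin n, x < r → ∀ c, st (r + 1) x = some c → st r x = some c := by
    intro r x hx c hc
    rcases hstep r with ⟨_, _, h⟩ | ⟨h1, h2, h3, h4⟩
    · rw [← h x hx, hc]
    · rw [h4, Function.update_of_ne, hc]
      rintro rfl
      rw [h2] at hc
      cases hc
  have pers : ∀ (x : Fin n) (c : Fin n) (d m : ℕ), (x : ℕ) < m → m + d ≤ n →
      st (m + d) x = some c → st m x = some c := by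
    intro x c d
    induction d with
    | zero => intro m _ _ h; exact h
    | succ d ih =>
      intro m hm hd h
      apply ih m hm (by omega)
      exact pers1 ⟨m + d, by omega⟩ x (by rw [Fin.lt_def]; simp; omega) c h
  have loc : ∀ s : Fin n, p (Fin.rev s) < s → ∀ m : ℕ, (p (Fin.rev s) : ℕ) < m → m ≤ s →
      st m (p (Fin.rev s)) = some (Fin.rev s) := by
    intro s hs m hm hms
    apply pers _ _ (s - m) m hm (by omega)
    have e : m + (s - m) = (s : ℕ) := by omega
    rw [e]
    rcases hstep s with ⟨h, _⟩ | ⟨h1, h2, h3, h4⟩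
    · exact absurd h hs.ne
    · rw [h4]; simp
  have hle : ∀ s : Fin n, p (Fin.rev s) ≤ s := by
    intro s
    rcases hstep s with ⟨h, _⟩ | ⟨h, _⟩
    · exact h.le
    · exact h.le
  have hinj : ∀ s s' : Fin n, s < s' → p (Fin.rev s) < s → p (Fin.rev s') < s' →
      p (Fin.rev s) = p (Fin.rev s') → False := by
    intro s s' hss hs hs' he
    have h1 := loc s hs s hs le_rfl
    have h2 := loc s' hs' s (by rw [← he]; exact hs) hss.le
    rw [he, h2] at h1
    have := Fin.rev_injective (Option.some.inj h1)
    exact hss.ne' this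
  refine ⟨hle, ?_, ?_, ?_⟩
  · intro s
    show p (Fin.rev (p (Fin.rev s))) = p (Fin.rev s)
    rcases (hle s).eq_or_lt with h | h
    · rw [h, h]
    · set x := p (Fin.rev s) with hx
      have h1 := loc s h (x + 1) (by omega) h
      rcases hstep x with ⟨h, _⟩ | ⟨g1, g2, g3, g4⟩
      · exact h
      · rw [g4, Function.update_of_ne g1.ne', h1] at g3
        cases g3
  · intro s s' hs hs' he
    rcases lt_trichotomy s s' with h | h | h
    · exact (hinj s s' h hs hs' he).elim
    · exact h
    · exact (hinj s' s h hs' hs he.symm).elim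
  · intro s s' hs hs' hlt hlt'
    by_contra hge
    have hss : s < s' := lt_of_le_of_ne (not_lt.1 hge) (by rintro rfl; exact lt_irrefl _ hlt)
    have h1 := loc s hs s hs le_rfl
    have h2 := loc s' hs' s hlt' hss.le
    have := (hst2 s (by omega)).d _ _ _ _ hlt hlt' h1 h2
    exact hge this

theorem outcome_of_good (p : Fin n → Fin n) (hg : Good (fun s => p (Fin.rev s))) :
    MVPOutcome p (decPerm n) := by
  obtain ⟨q, hq⟩ : ∃ q : Fin n → Fin n, q = fun s => p (Fin.rev s) := ⟨_, rfl⟩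
  rw [← hq] at hg
  obtain ⟨gle, gidem, ginj, gnc⟩ := hg
  have key : ∀ t, t ≤ n → ∃ S, preRun p t = some S ∧
      ∀ x y : Fin n, S x = some (Fin.rev y) ↔
        n - t ≤ (y : ℕ) ∧ x = if (q y : ℕ) < n - t then q y else y := by
    intro t
    induction t with
    | zero =>
      intro _
      refine ⟨_, preRun_zero p, ?_⟩
      intro x y
      have := y.2
      simp
    | succ t ih =>
      intro ht
      obtain ⟨S, hS, hspec⟩ := ih (by omega)
      rw [preRun_succ p t ht, hS, Option.bind_some]
      obtain ⟨r, hr⟩ : ∃ r : Fin n, r = Fin.rev ⟨t, ht⟩ := ⟨_, rfl⟩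
      have hrt : (⟨t, ht⟩ : Fin n) = Fin.rev r := by rw [hr, Fin.rev_rev]
      have hrv : (r : ℕ) = n - (t + 1) := by rw [hr, Fin.val_rev]
      have hm : n - t = (r : ℕ) + 1 := by omega
      have hpr : p (Fin.rev r) = q r := by rw [hq]
      rw [hrt, hpr, ← hrv]
      rw [hm] at hspec
      have hnone : ∀ x : Fin n, (∀ y : Fin n, ¬ ((r : ℕ) + 1 ≤ (y : ℕ) ∧
          x = if (q y : ℕ) < (r : ℕ) + 1 then q y else y)) → S x = none := by
        intro x hx
        cases hc : S x with
        | none => rfl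
        | some c =>
          exfalso
          apply hx (Fin.rev c)
          rw [← hspec, Fin.rev_rev, hc]
      have hupd : S (q r) = none → mvpStep S (Fin.rev r) (q r) =
          some (Function.update S (q r) (some (Fin.rev r))) := by
        intro h
        simp [mvpStep, h]
      rcases (gle r).eq_or_lt with hqr | hqr
      · by_cases hex : ∃ y, r < y ∧ q y = r
        · obtain ⟨y, hy, hqy⟩ := hex
          have hv : S r = some (Fin.rev y) := by
            rw [hspec]
            refine ⟨hy, ?_⟩
            rw [hqy]; simp
          have hyn : S y = none := by
            apply hnone
            rintro z ⟨h1, h2⟩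
            split_ifs at h2 with h3
            · grind
            · grind
          have hb : ∀ w, r < w → w < y → S w ≠ none := by
            intro w hw hwy hn
            by_cases hqw : (q w : ℕ) < (r : ℕ) + 1
            · rcases (gle w).eq_or_lt with h | h
              · grind
              · by_cases h' : q w = r
                · have := ginj w y h (by grind) (by grind)
                  grind
                · have := gnc w y h (by grind) (by grind) (by grind)
                  grind
            · have := (hspec w w).2 ⟨hw, by simp [hqw]⟩
              rw [hn] at this
              cases this
          rw [hqr, mvpStep_bump S _ r _ y hv hy hyn hb]
          refine ⟨_, rfl, ?_⟩
          intro x z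
          have hx := hspec x z
          have hz : q z = r → z = r ∨ z = y := by
            intro h
            rcases (gle z).eq_or_lt with h' | h'
            · left; rw [← h', h]
            · right; exact ginj z y h' (by grind) (by grind)
          simp only [Function.update_apply]
          have ri : ∀ a b : Fin n, Fin.rev a = Fin.rev b ↔ a = b := fun a b => Fin.rev_inj
          split_ifs with h1 h2 h3 h3 h3
          all_goals try simp only [Option.some.injEq, ri]
          all_goals grind
        · have hv : S (q r) = none := by
            apply hnone
            rintro z ⟨h1, h2⟩
            split_ifs at h2 with h3
            · exact hex ⟨z, h1, by grind⟩
            · grind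
          rw [hupd hv]
          refine ⟨_, rfl, ?_⟩
          intro x z
          have hx := hspec x z
          have ri : ∀ a b : Fin n, Fin.rev a = Fin.rev b ↔ a = b := fun a b => Fin.rev_inj
          have hz : r < z → q z ≠ r := fun h h' => hex ⟨z, h, h'⟩
          simp only [Function.update_apply]
          split_ifs with h1 h2 h2
          all_goals try simp only [Option.some.injEq, ri]
          all_goals grind
      · have hv : S (q r) = none := by
          apply hnone
          rintro z ⟨h1, h2⟩
          split_ifs at h2 with h3
          · have := ginj z r (by grind) hqr (by grind)
            grind
          · grind
        rw [hupd hv]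
        refine ⟨_, rfl, ?_⟩
        intro x z
        have hx := hspec x z
        have hxx := hspec (q r) z
        have ri : ∀ a b : Fin n, Fin.rev a = Fin.rev b ↔ a = b := fun a b => Fin.rev_inj
        have hz : q z ≠ r := by
          intro h
          have := gidem z
          rw [h] at this
          grind
        simp only [Function.update_apply]
        split_ifs with h1 h2 h2
        all_goals try simp only [Option.some.injEq, ri]
        all_goals grind
  obtain ⟨S, hS, hspec⟩ := key n le_rfl
  rw [preRun_full] at hS
  refine ⟨S, hS, fun i => ?_⟩
  show S i = some (Fin.rev i)
  rw [hspec]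
  simp

theorem outcome_iff (p : Fin n → Fin n) :
    MVPOutcome p (decPerm n) ↔ Good (fun s => p (Fin.rev s)) :=
  ⟨good_of_outcome p, outcome_of_good p⟩

theorem prefCount_rev (p : Fin n → Fin n) (j : Fin n) :
    prefCount p j = (univ.filter fun s => p (Fin.rev s) = j).card := by
  unfold prefCount
  apply Finset.card_bij (fun a _ => Fin.rev a)
  · intro a ha; simpa using ha
  · intro a _ b _ h; exact Fin.rev_injective h
  · intro b hb; exact ⟨Fin.rev b, by simpa using hb, by simp⟩

theorem good_count (p : Fin n → Fin n) (hg : Good (fun s => p (Fin.rev s))) (j : Fin n) :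
    (p (Fin.rev j) < j ∧ prefCount p j = 0 ∧ ¬ ∃ y, j < y ∧ p (Fin.rev y) = j) ∨
    (p (Fin.rev j) = j ∧ prefCount p j = 1 ∧ ¬ ∃ y, j < y ∧ p (Fin.rev y) = j) ∨
    (p (Fin.rev j) = j ∧ prefCount p j = 2 ∧ ∃ y, j < y ∧ p (Fin.rev y) = j) := by
  obtain ⟨q, hq⟩ : ∃ q : Fin n → Fin n, q = fun s => p (Fin.rev s) := ⟨_, rfl⟩
  have hq' : ∀ s, p (Fin.rev s) = q s := by intro s; rw [hq]
  rw [← hq] at hg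
  rw [prefCount_rev]
  simp only [hq']
  obtain ⟨gle, gidem, ginj, gnc⟩ := hg
  rcases (gle j).eq_or_lt with h | h
  · right
    by_cases hex : ∃ y, j < y ∧ q y = j
    · right
      refine ⟨h, ?_, hex⟩
      obtain ⟨y, hy, hqy⟩ := hex
      rw [Finset.card_eq_two]
      refine ⟨j, y, hy.ne, ?_⟩
      ext z
      simp only [mem_filter, mem_univ, true_and, mem_insert, mem_singleton]
      constructor
      · intro hz
        rcases (gle z).eq_or_lt with h' | h'
        · left; rw [← h', hz]
        · right; exact ginj z y h' (by rw [hqy]; exact hy) (by rw [hz, hqy])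
      · rintro (rfl | rfl)
        · exact h
        · exact hqy
    · left
      refine ⟨h, ?_, hex⟩
      rw [Finset.card_eq_one]
      refine ⟨j, ?_⟩
      ext z
      simp only [mem_filter, mem_univ, true_and, mem_singleton]
      constructor
      · intro hz
        by_contra hne
        exact hex ⟨z, lt_of_le_of_ne (by rw [← hz]; exact gle z) (Ne.symm hne), hz⟩
      · rintro rfl
        exact h
  · left
    have hno : ∀ y, q y ≠ j := by
      intro y hy
      have := gidem y
      rw [hy] at this
      exact h.ne this
    refine ⟨h, ?_, fun ⟨y, _, hy⟩ => hno y hy⟩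
    rw [Finset.card_eq_zero]
    ext z
    simp [hno z]

theorem stepVal_Phi (p : Fin n → Fin n) (hc : ∀ j, prefCount p j ≤ 2) (j : Fin n) :
    stepVal (Phi p j) = (prefCount p j : ℤ) - 1 := by
  have := hc j
  unfold Phi
  split_ifs with h1 h2
  · simp [stepVal]; omega
  · simp [stepVal]; omega
  · simp [stepVal]; omega

theorem sum_prefCount (p : Fin n → Fin n) (A : Finset (Fin n)) :
    ∑ j ∈ A, prefCount p j = (univ.filter fun i => p i ∈ A).card := by
  unfold prefCount
  rw [Finset.card_eq_sum_card_fiberwise (f := p) (t := A)]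
  · apply Finset.sum_congr rfl
    intro j hj
    congr 1
    ext i
    simp
    rintro rfl
    exact hj
  · intro i hi
    simpa using hi

theorem motzkin_iff (p : Fin n → Fin n) (hc : ∀ j, prefCount p j ≤ 2) :
    IsMotzkinPath (Phi p) ↔ IsParkingFunction p := by
  unfold IsMotzkinPath IsParkingFunction
  simp only [stepVal_Phi p hc]
  have h0 : ∀ A : Finset (Fin n), ∑ j ∈ A, ((prefCount p j : ℤ) - 1) =
      ((univ.filter fun i => p i ∈ A).card : ℤ) - A.card := by
    intro A
    rw [Finset.sum_sub_distrib, ← sum_prefCount]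
    push_cast
    simp
  simp only [h0]
  constructor
  · rintro ⟨_, h⟩ k
    have := h k
    have e : (univ.filter fun j : Fin n => j ≤ k).card = (k : ℕ) + 1 := by
      have : (univ.filter fun j : Fin n => j ≤ k) = Finset.Iic k := by ext; simp
      rw [this]; simp
    rw [e] at this
    simp at this
    omega
  · intro h
    refine ⟨by simp, ?_⟩
    intro k
    have := h k
    have e : (univ.filter fun j : Fin n => j ≤ k).card = (k : ℕ) + 1 := by
      have : (univ.filter fun j : Fin n => j ≤ k) = Finset.Iic k := by ext; simp
      rw [this]; simp
    rw [e]
    simp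
    omega

theorem good_unique (q q' : Fin n → Fin n) (hg : Good q) (hg' : Good q')
    (hD : ∀ s, q s < s ↔ q' s < s)
    (hU : ∀ s, (∃ y, s < y ∧ q y = s) ↔ (∃ y, s < y ∧ q' y = s)) : q = q' := by
  have key : ∀ k : ℕ, ∀ s : Fin n, (s : ℕ) = k → q s = q' s := by
    intro k
    induction k using Nat.strong_induction_on with
    | _ k ih =>
      rintro s rfl
      have ih' : ∀ y : Fin n, y < s → q y = q' y := fun y hy => ih y hy y rfl
      rcases (hg.le s).eq_or_lt with h | h
      · rcases (hg'.le s).eq_or_lt with h' | h'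
        · rw [h, h']
        · exact absurd ((hD s).2 h') (by rw [h]; exact lt_irrefl _)
      · have h' := (hD s).1 h
        rcases lt_trichotomy (q s) (q' s) with hl | hl | hl
        · exfalso
          obtain ⟨y, hy, hqy⟩ := (hU (q' s)).2 ⟨s, h', rfl⟩
          have hys := hg.nc s y h (by rw [hqy]; exact hy) (by rw [hqy]; exact hl)
            (by rw [hqy]; exact h')
          have e := ih' y hys
          have := hg'.inj y s (by rw [← e, hqy]; exact hy) h' (by rw [← e, hqy])
          exact hys.ne this
        · exact hl
        · exfalso
          obtain ⟨y, hy, hqy⟩ := (hU (q s)).1 ⟨s, h, rfl⟩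
          have hys := hg'.nc s y h' (by rw [hqy]; exact hy) (by rw [hqy]; exact hl)
            (by rw [hqy]; exact h)
          have e := ih' y hys
          have := hg.inj y s (by rw [e, hqy]; exact hy) h (by rw [e, hqy])
          exact hys.ne this
  funext s
  exact key s s rfl

/-- matching from heights -/
theorem exists_good (φ : Fin n → MStep) (hφ : IsMotzkinPath φ) :
    ∃ q : Fin n → Fin n, Good q ∧ (∀ s, q s < s ↔ φ s = MStep.D) ∧
      ∀ s, (∃ y, s < y ∧ q y = s) ↔ φ s = MStep.U := by
  classical
  obtain ⟨h1, h2⟩ := hφ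
  obtain ⟨H, hH⟩ : ∃ H : ℕ → ℤ, H = fun k => ∑ j ∈ univ.filter (fun j : Fin n => (j : ℕ) < k),
    stepVal (φ j) := ⟨_, rfl⟩
  have H0 : H 0 = 0 := by simp [hH]
  have Hn : H n = 0 := by simp [hH, h1]
  have Hs : ∀ k : Fin n, H (k + 1) = H k + stepVal (φ k) := by
    intro k
    rw [hH]
    have : (univ.filter fun j : Fin n => (j : ℕ) < k + 1) =
        insert k (univ.filter fun j : Fin n => (j : ℕ) < k) := by
      ext j
      simp [Fin.ext_iff]
      omega
    simp only [this]
    rw [Finset.sum_insert (by simp)]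
    ring
  have Hpos : ∀ k, k ≤ n → 0 ≤ H k := by
    intro k hk
    cases k with
    | zero => rw [H0]
    | succ k =>
      have := h2 ⟨k, hk⟩
      rw [hH]
      convert this using 3
      simp [Fin.le_def, Nat.lt_succ_iff]
  have Hstep : ∀ k, k < n → H k - 1 ≤ H (k + 1) ∧ H (k + 1) ≤ H k + 1 := by
    intro k hk
    have := Hs ⟨k, hk⟩
    simp only at this
    rw [this]
    cases φ ⟨k, hk⟩ <;> simp [stepVal] <;> omega
  -- the matched up step
  have hm : ∀ s : Fin n, φ s = MStep.D → ∃ x : Fin n, x < s ∧ H x + 1 = H s ∧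
      ∀ y : ℕ, (x : ℕ) < y → y ≤ s → H s ≤ H y := by
    intro s hs
    have hD := Hs s
    rw [hs] at hD
    simp only [stepVal] at hD
    have hp := Hpos (s + 1) s.2
    obtain ⟨x, hx⟩ : ∃ x, x = Nat.findGreatest (fun x => H x < H s) s := ⟨_, rfl⟩
    have hPx : H x < H s := by
      rw [hx]
      exact Nat.findGreatest_spec (P := fun x => H x < H s) (Nat.zero_le _) (by rw [H0]; omega)
    have hxs : x ≤ s := by rw [hx]; exact Nat.findGreatest_le _
    have hlt : x < s := lt_of_le_of_ne hxs (by rintro h; rw [h] at hPx; exact lt_irrefl _ hPx)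
    have hbet : ∀ y : ℕ, x < y → y ≤ s → H s ≤ H y := by
      intro y hy hys
      rw [hx] at hy
      exact not_lt.1 (Nat.findGreatest_is_greatest hy hys)
    have := Hstep x (by omega)
    have := hbet (x + 1) (by omega) (by omega)
    exact ⟨⟨x, by omega⟩, hlt, by simp only; omega, hbet⟩
  choose f hf1 hf2 hf3 using hm
  obtain ⟨q, hq⟩ : ∃ q : Fin n → Fin n, q = fun s => if h : φ s = MStep.D then f s h else s :=
    ⟨_, rfl⟩
  have qD : ∀ s, φ s = MStep.D → q s < s ∧ H (q s) + 1 = H s ∧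
      ∀ y : ℕ, (q s : ℕ) < y → y ≤ s → H s ≤ H y := by
    intro s hs
    have : q s = f s hs := by rw [hq]; simp [hs]
    rw [this]
    exact ⟨hf1 s hs, hf2 s hs, hf3 s hs⟩
  have qN : ∀ s, φ s ≠ MStep.D → q s = s := by
    intro s hs
    rw [hq]; simp [hs]
  have hlt : ∀ s, q s < s ↔ φ s = MStep.D := by
    intro s
    refine ⟨fun h => ?_, fun h => (qD s h).1⟩
    by_contra hne
    rw [qN s hne] at h
    exact lt_irrefl _ h
  have hHD : ∀ s, φ s = MStep.D → H (s + 1) = H s - 1 := by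
    intro s hs
    have hD := Hs s
    rw [hs] at hD
    simp only [stepVal] at hD
    omega
  have hUq : ∀ s, φ s = MStep.D → φ (q s) = MStep.U := by
    intro s hs
    obtain ⟨g1, g2, g3⟩ := qD s hs
    have := g3 (q s + 1) (by omega) g1
    have h4 := Hs (q s)
    cases hc : φ (q s) with
    | U => rfl
    | H => rw [hc] at h4; simp only [stepVal] at h4; omega
    | D => rw [hc] at h4; simp only [stepVal] at h4; omega
  have hinj : ∀ s s' : Fin n, s < s' → q s < s → q s' < s' → q s = q s' → False := by
    intro s s' hss hs hs' he
    rw [hlt] at hs hs'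
    obtain ⟨g1, g2, g3⟩ := qD s hs
    obtain ⟨k1, k2, k3⟩ := qD s' hs'
    have := k3 (s + 1) (by rw [← he]; have := Fin.lt_def.1 g1; omega) hss
    have := hHD s hs
    rw [he] at g2
    omega
  refine ⟨q, ⟨?_, ?_, ?_, ?_⟩, hlt, ?_⟩
  · intro s
    by_cases h : φ s = MStep.D
    · exact (qD s h).1.le
    · exact (qN s h).le
  · intro s
    by_cases h : φ s = MStep.D
    · exact qN _ (by rw [hUq s h]; simp)
    · rw [qN s h, qN s h]
  · intro s s' hs hs' he
    rcases lt_trichotomy s s' with h | h | h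
    · exact (hinj s s' h hs hs' he).elim
    · exact h
    · exact (hinj s' s h hs' hs he.symm).elim
  · intro s s' hs hs' hl hl'
    by_contra hge
    have hss : s < s' := lt_of_le_of_ne (not_lt.1 hge) (by rintro rfl; exact lt_irrefl _ hl)
    rw [hlt] at hs hs'
    obtain ⟨g1, g2, g3⟩ := qD s hs
    obtain ⟨k1, k2, k3⟩ := qD s' hs'
    have e1 := k3 (s + 1) (by have := Fin.lt_def.1 hl'; omega) hss
    have e2 := hHD s hs
    have e3 := g3 (q s') hl hl'.le
    omega
  · intro s
    constructor
    · rintro ⟨y, hy, rfl⟩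
      exact hUq y ((hlt y).1 hy)
    · intro hs
      have hU := Hs s
      rw [hs] at hU
      simp only [stepVal] at hU
      have hex : ∃ y : ℕ, (s : ℕ) < y ∧ H y ≤ H s :=
        ⟨n, s.2, by rw [Hn]; exact Hpos s s.2.le⟩
      obtain ⟨y, hy⟩ : ∃ y, y = Nat.find hex := ⟨_, rfl⟩
      have hy1 : (s : ℕ) < y ∧ H y ≤ H s := by rw [hy]; exact Nat.find_spec hex
      have hy2 : ∀ z, (s : ℕ) < z → z < y → H s < H z := by
        intro z hz hzy
        rw [hy] at hzy
        have := Nat.find_min hex hzy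
        by_contra hcon
        exact this ⟨hz, not_lt.1 hcon⟩
      have hyn : y ≤ n := by
        rw [hy]
        exact Nat.find_min' hex ⟨s.2, by rw [Hn]; exact Hpos s s.2.le⟩
      have hy3 : (s : ℕ) + 1 < y := by
        rcases Nat.lt_or_ge (s + 1) y with h | h
        · exact h
        · have : y = s + 1 := by omega
          rw [this] at hy1
          omega
      obtain ⟨w, rfl⟩ : ∃ w, y = w + 1 := ⟨y - 1, by omega⟩
      have e1 := hy2 w (by omega) (by omega)
      have e2 := Hstep w (by omega)
      have hwD : φ ⟨w, by omega⟩ = MStep.D := by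
        have h4 := Hs ⟨w, by omega⟩
        simp only at h4
        cases hc : φ ⟨w, by omega⟩ with
        | D => rfl
        | H => rw [hc] at h4; simp only [stepVal] at h4; omega
        | U => rw [hc] at h4; simp only [stepVal] at h4; omega
      obtain ⟨k1, k2, k3⟩ := qD _ hwD
      refine ⟨⟨w, by omega⟩, by rw [Fin.lt_def]; simp only; omega, ?_⟩
      have k1' := Fin.lt_def.1 k1
      simp only at k1' k2 k3
      rcases lt_trichotomy (q ⟨w, by omega⟩) s with h | h | h
      · have := k3 s h (by omega)
        omega
      · exact h
      · have := hy2 (q ⟨w, by omega⟩) h (by omega)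
        omega

theorem good_Phi (p : Fin n → Fin n) (hg : Good (fun s => p (Fin.rev s))) (s : Fin n) :
    (p (Fin.rev s) < s ↔ Phi p s = MStep.D) ∧
    ((∃ y, s < y ∧ p (Fin.rev y) = s) ↔ Phi p s = MStep.U) := by
  unfold Phi
  rcases good_count p hg s with ⟨h1, h2, h3⟩ | ⟨h1, h2, h3⟩ | ⟨h1, h2, h3⟩
  · simp [h1, h2, h3]
  · simp [h1, h2, h3]
  · simp [h1, h2, h3]

theorem good_le_two (p : Fin n → Fin n) (hg : Good (fun s => p (Fin.rev s))) (s : Fin n) :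
    prefCount p s ≤ 2 := by
  rcases good_count p hg s with ⟨h1, h2, h3⟩ | ⟨h1, h2, h3⟩ | ⟨h1, h2, h3⟩ <;> omega

theorem Phi_inj (p p' : Fin n → Fin n) (h : MVPOutcome p (decPerm n))
    (h' : MVPOutcome p' (decPerm n)) (he : Phi p = Phi p') : p = p' := by
  rw [outcome_iff] at h h'
  have := good_unique _ _ h h'
    (fun s => by rw [(good_Phi p h s).1, (good_Phi p' h' s).1, he])
    (fun s => by rw [(good_Phi p h s).2, (good_Phi p' h' s).2, he])
  funext i
  have := congrFun this (Fin.rev i)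
  simpa using this

theorem mstep_eq (a b : MStep) (h1 : a = MStep.D ↔ b = MStep.D)
    (h2 : a = MStep.U ↔ b = MStep.U) : a = b := by
  cases a <;> cases b <;> simp_all

theorem Phi_surj (φ : Fin n → MStep) (hφ : IsMotzkinPath φ) :
    ∃ p : Fin n → Fin n, MVPOutcome p (decPerm n) ∧ Phi p = φ := by
  obtain ⟨q, hg, hD, hU⟩ := exists_good φ hφ
  have e : (fun s => (fun i => q (Fin.rev i)) (Fin.rev s)) = q := by funext s; simp
  have hg' : Good (fun s => (fun i => q (Fin.rev i)) (Fin.rev s)) := by rw [e]; exact hg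
  refine ⟨fun i => q (Fin.rev i), (outcome_iff _).2 hg', ?_⟩
  funext s
  have := good_Phi (fun i => q (Fin.rev i)) hg' s
  simp only [Fin.rev_rev] at this
  apply mstep_eq
  · rw [← this.1, hD]
  · rw [← this.2, hU]

theorem rearr (p p' : Fin n → Fin n) (h : ∀ j, prefCount p j = prefCount p' j) :
    ∃ σ : Equiv.Perm (Fin n), p' = p ∘ σ := by
  have : ∀ j, Nonempty ({a // p' a = j} ≃ {b // p b = j}) := by
    intro j
    refine ⟨Fintype.equivOfCardEq ?_⟩
    have := h j
    unfold prefCount at this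
    rw [Fintype.card_subtype, Fintype.card_subtype, this]
  refine ⟨Equiv.ofFiberEquiv fun j => (this j).some, ?_⟩
  funext i
  exact (Equiv.ofFiberEquiv_map _ i).symm

theorem prefCount_comp (p : Fin n → Fin n) (σ : Equiv.Perm (Fin n)) (j : Fin n) :
    prefCount (p ∘ σ) j = prefCount p j := by
  unfold prefCount
  apply Finset.card_bij (fun a _ => σ a)
  · intro a ha; simpa using ha
  · intro a _ b _ h; exact σ.injective h
  · intro b hb; exact ⟨σ.symm b, by simpa using hb, by simp⟩

/-- every Motzkin parking function has a unique rearrangement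
whose MVP outcome is the decreasing permutation `dec_n`; in particular `Φ`
restricted to `Fib_n(dec_n)` is a bijection onto the Motzkin paths. -/
theorem statement10 (n : ℕ) (p : Fin n → Fin n) (hp : IsParkingFunction p)
    (hmotz : ∀ j, prefCount p j ≤ 2) :
    (∃! p' : Fin n → Fin n,
      (∃ σ : Equiv.Perm (Fin n), p' = p ∘ σ) ∧ MVPOutcome p' (decPerm n)) ∧
    Set.BijOn Phi (FibMVP (decPerm n)) {φ : Fin n → MStep | IsMotzkinPath φ} := by
  constructor
  · obtain ⟨p', hp', he⟩ := Phi_surj (Phi p) ((motzkin_iff p hmotz).2 hp)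
    refine ⟨p', ⟨rearr p p' ?_, hp'⟩, ?_⟩
    · intro j
      have h1 := stepVal_Phi p hmotz j
      have h2 := stepVal_Phi p' (good_le_two p' ((outcome_iff p').1 hp')) j
      rw [he, h1] at h2
      omega
    · rintro p'' ⟨⟨σ, hσ⟩, ho⟩
      apply Phi_inj p'' p' ho hp'
      rw [he]
      funext j
      simp only [Phi, hσ, prefCount_comp]
  · refine ⟨?_, ?_, ?_⟩
    · rintro p ⟨hpf, ho⟩
      exact (motzkin_iff p (good_le_two p ((outcome_iff p).1 ho))).2 hpf
    · rintro p ⟨_, ho⟩ p' ⟨_, ho'⟩ he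
      exact Phi_inj p p' ho ho' he
    · intro φ hφ
      obtain ⟨p', hp', he⟩ := Phi_surj φ hφ
      refine ⟨p', ⟨?_, hp'⟩, he⟩
      rw [← motzkin_iff p' (good_le_two p' ((outcome_iff p').1 hp')), he]
      exact hφ

end MVPPaper
end

section
/- For every m ≥ 0, the MVP fibre of the complete bipartite permutation τ_{m,2} = 34⋯(m+2)12 ∈ S_{m+2} has size |Fib_{m+2}(τ_{m,2})| = m + 1 + ⌊(m+1)²/2⌋. -/
/- Common definitions: the classical and MVP parking processes, parking
functions, inversion graphs and 1-subgraphs, Motzkin paths, and sandpile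
configurations on complete graphs. Spots, cars and vertices are 0-indexed
(element `i : Fin n` corresponds to the 1-indexed `i+1` of the paper). -/

namespace MVPPaper

open Finset

variable {n : ℕ}

theorem firstFree_spec {occ : Fin n → Option (Fin n)} {s k : Fin n}
    (h : firstFree occ s = some k) : s ≤ k ∧ occ k = none := by
  have := List.find?_some h
  simpa using this

theorem firstFree_eq {occ : Fin n → Option (Fin n)} {s k : Fin n}
    (h1 : s ≤ k) (h2 : occ k = none) (h3 : ∀ j, s ≤ j → j < k → occ j ≠ none) :
    firstFree occ s = some k := by
  unfold firstFree
  rw [List.find?_eq_some_iff_getElem]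
  refine ⟨by simp [h1, h2], k, by simp, by simp, ?_⟩
  intro j hj
  have hjn : j < n := lt_trans hj k.2
  have := h3 ⟨j, hjn⟩
  simp only [List.getElem_finRange]
  by_cases hs : s ≤ ⟨j, hjn⟩
  · have := this hs hj
    simp [hs, Option.isSome_iff_ne_none, this]
  · simp [hs]

/-- State after the first `t` cars. -/
def St (p : Fin n → Fin n) : ℕ → Option (Fin n → Option (Fin n))
  | 0 => some fun _ => none
  | t + 1 => if h : t < n then (St p t).bind fun occ => mvpStep occ ⟨t, h⟩ (p ⟨t, h⟩) else St p t

theorem St_eq_take (p : Fin n → Fin n) (t : ℕ) (ht : t ≤ n) :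
    St p t = List.foldlM (fun occ i => mvpStep occ i (p i)) (fun _ => none)
      ((List.finRange n).take t) := by
  induction t with
  | zero => simp [St]
  | succ t ih =>
    have h : t < n := ht
    rw [List.take_add_one, List.foldlM_append, ← ih h.le]
    simp [St, h]

theorem mvpRun_eq (p : Fin n → Fin n) : mvpRun p = St p n := by
  rw [St_eq_take p n le_rfl, mvpRun, runProcess, List.take_of_length_le (by simp)]

theorem step_mono {occ occ' : Fin n → Option (Fin n)} {i s : Fin n}
    (hlt : ∀ k j, occ k = some j → j < i) (h : mvpStep occ i s = some occ') :
    occ' s = some i ∧ (∀ k j, occ' k = some j → j ≤ i) ∧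
    (∀ k j, occ k = some j → ∃ j', j ≤ j' ∧ occ' k = some j') ∧
    (∀ k j, occ k = some j → ∃ k', k ≤ k' ∧ occ' k' = some j) := by
  unfold mvpStep at h
  split at h
  · rename_i hs
    simp only [Option.some.injEq] at h
    subst h
    refine ⟨by simp, ?_, ?_, ?_⟩
    · intro k j hk
      by_cases hks : k = s
      · subst hks; simp at hk; exact hk.ge
      · rw [Function.update_of_ne hks] at hk; exact (hlt k j hk).le
    · intro k j hk
      have hks : k ≠ s := by rintro rfl; simp [hs] at hk
      exact ⟨j, le_rfl, by rw [Function.update_of_ne hks, hk]⟩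
    · intro k j hk
      have hks : k ≠ s := by rintro rfl; simp [hs] at hk
      exact ⟨k, le_rfl, by rw [Function.update_of_ne hks, hk]⟩
  · rename_i j0 hs
    rw [Option.map_eq_some_iff] at h
    obtain ⟨q, hq, rfl⟩ := h
    obtain ⟨hsq, hq0⟩ := firstFree_spec hq
    have hqs : q ≠ s := by rintro rfl; simp at hq0
    rw [Function.update_of_ne hqs] at hq0
    refine ⟨by rw [Function.update_of_ne hqs.symm]; simp, ?_, ?_, ?_⟩
    · intro k j hk
      by_cases hkq : k = q
      · subst hkq; simp at hk; subst hk; exact (hlt s _ hs).le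
      · rw [Function.update_of_ne hkq] at hk
        by_cases hks : k = s
        · subst hks; simp at hk; exact hk.ge
        · rw [Function.update_of_ne hks] at hk; exact (hlt k j hk).le
    · intro k j hk
      have hkq : k ≠ q := by rintro rfl; simp [hq0] at hk
      by_cases hks : k = s
      · subst hks; exact ⟨i, (hlt k j hk).le, by rw [Function.update_of_ne hkq]; simp⟩
      · exact ⟨j, le_rfl, by rw [Function.update_of_ne hkq, Function.update_of_ne hks, hk]⟩
    · intro k j hk
      have hkq : k ≠ q := by rintro rfl; simp [hq0] at hk
      by_cases hks : k = s
      · subst hks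
        rw [hs] at hk
        exact ⟨q, hsq, by simpa using hk⟩
      · exact ⟨k, le_rfl, by rw [Function.update_of_ne hkq, Function.update_of_ne hks, hk]⟩

theorem St_inv (p : Fin n → Fin n) (t : ℕ) (ht : t ≤ n) (occ : Fin n → Option (Fin n))
    (h : St p t = some occ) :
    (∀ k j, occ k = some j → (j : ℕ) < t) ∧
    ∀ c : Fin n, (c : ℕ) < t → (∃ j', c ≤ j' ∧ occ (p c) = some j') ∧
      ∃ k', p c ≤ k' ∧ occ k' = some c := by
  induction t generalizing occ with
  | zero =>
    simp only [St, Option.some.injEq] at h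
    subst h
    simp
  | succ t ih =>
    have h' : t < n := ht
    simp only [St, h', dif_pos, Option.bind_eq_some_iff] at h
    obtain ⟨o, ho, hst⟩ := h
    obtain ⟨i1, i2⟩ := ih h'.le o ho
    obtain ⟨s1, s2, s3, s4⟩ := step_mono (fun k j hk => Fin.lt_def.2 (i1 k j hk)) hst
    refine ⟨fun k j hk => ?_, fun c hc => ?_⟩
    · have := s2 k j hk
      rw [Fin.le_def] at this
      simp at this; omega
    · by_cases hct : (c : ℕ) = t
      · obtain rfl : c = ⟨t, h'⟩ := Fin.ext hct
        exact ⟨⟨_, le_rfl, s1⟩, ⟨_, le_rfl, s1⟩⟩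
      · obtain ⟨⟨j, hj, hoj⟩, ⟨k, hk, hok⟩⟩ := i2 c (by omega)
        obtain ⟨j', hj', e⟩ := s3 _ _ hoj
        obtain ⟨k', hk', e'⟩ := s4 _ _ hok
        exact ⟨⟨j', hj.trans hj', e⟩, ⟨k', hk.trans hk', e'⟩⟩

/-- If `p` has outcome `π`, the preferred spot `p c` finally holds a car `≥ c`, and `c`
is finally at or after `p c`. -/
theorem outcome_inv {p : Fin n → Fin n} {π : Equiv.Perm (Fin n)} (h : MVPOutcome p π)
    (c : Fin n) : c ≤ π (p c) ∧ p c ≤ π.symm c := by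
  obtain ⟨occ, h1, h2⟩ := h
  rw [mvpRun_eq] at h1
  obtain ⟨⟨j, hj, e⟩, ⟨k, hk, e'⟩⟩ := (St_inv p n le_rfl occ h1).2 c c.2
  rw [h2] at e e'
  simp at e e'
  subst e
  rw [← e']
  simp [← e', hj] at *
  exact ⟨hj, hk⟩

/-- Configuration during the sweep. -/
def cfg (m t x y : ℕ) : Fin (m + 2) → Option (Fin (m + 2)) := fun k =>
  if h : (k : ℕ) < t ∧ (k : ℕ) < m then some ⟨k + 2, by omega⟩
  else if (k : ℕ) = x then some 0
  else if (k : ℕ) = y then some 1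
  else none

/-- The parity condition. -/
def G (m x y : ℕ) : Prop := if x < y then (m + 1 + y) % 2 = 0 else (m + 1 + x) % 2 = 1

theorem cfg_step (m t x y : ℕ) (ht : t < m) (hx : t ≤ x) (hy : t ≤ y) (hx' : x ≤ m + 1)
    (hy' : y ≤ m + 1) (hxy : x ≠ y) :
    ∃ x' y', mvpStep (cfg m t x y) ⟨t + 2, by omega⟩ ⟨t, by omega⟩ = some (cfg m (t + 1) x' y') ∧
      t + 1 ≤ x' ∧ t + 1 ≤ y' ∧ x' ≤ m + 1 ∧ y' ≤ m + 1 ∧ x' ≠ y' ∧ (G m x' y' ↔ G m x y) := by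
  have key : ∀ q : ℕ, ∀ hq : q ≤ m + 1, t < q → q ≠ x → q ≠ y →
      (∀ r, t < r → r < q → r = x ∨ r = y) →
      firstFree (Function.update (cfg m t x y) ⟨t, by omega⟩ (some ⟨t + 2, by omega⟩))
        ⟨t, by omega⟩ = some ⟨q, by omega⟩ := by
    intro q hq h1 h2 h3 h4
    apply firstFree_eq
    · rw [Fin.le_def]; exact h1.le
    · rw [Function.update_of_ne (by simp; omega)]
      simp [cfg, h2, h3]; omega
    · intro j hj hjq
      rw [Fin.le_def] at hj
      rw [Fin.lt_def] at hjq
      simp only at hj hjq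
      by_cases hjt : j = ⟨t, by omega⟩
      · rw [hjt]; simp
      · rw [Function.update_of_ne hjt]
        have : (j : ℕ) ≠ t := fun h => hjt (Fin.ext h)
        have h5 := h4 j (by omega) hjq
        unfold cfg
        rw [dif_neg (by omega)]
        split_ifs <;> simp
        omega
  by_cases hxt : x = t
  · have e : cfg m t x y ⟨t, by omega⟩ = some 0 := by simp [cfg, hxt]
    have fin : ∀ q : ℕ, ∀ hq : q ≤ m + 1, t < q → q ≠ y →
        Function.update (Function.update (cfg m t x y) ⟨t, by omega⟩ (some ⟨t + 2, by omega⟩))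
          ⟨q, by omega⟩ (some 0) = cfg m (t + 1) q y := by
      intro q hq h1 h2
      funext k
      simp only [Function.update_apply, cfg, Fin.ext_iff]
      split_ifs <;> first | rfl | omega | (simp only [Option.some.injEq, Fin.mk.injEq]; omega)
    by_cases hyt : y = t + 1
    · refine ⟨t + 2, y, ?_, by omega, by omega, by omega, by omega, by omega, ?_⟩
      · simp only [mvpStep, e]
        rw [key (t + 2) (by omega) (by omega) (by omega) (by omega) (by omega), Option.map_some,
          fin (t + 2) (by omega) (by omega) (by omega)]
      · unfold G; split_ifs <;> omega
    · refine ⟨t + 1, y, ?_, by omega, by omega, by omega, by omega, by omega, ?_⟩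
      · simp only [mvpStep, e]
        rw [key (t + 1) (by omega) (by omega) (by omega) (by omega) (by omega), Option.map_some,
          fin (t + 1) (by omega) (by omega) (by omega)]
      · unfold G; split_ifs <;> omega
  by_cases hyt : y = t
  · have e : cfg m t x y ⟨t, by omega⟩ = some 1 := by
      have : t ≠ x := fun h => hxt h.symm
      simp [cfg, hyt, this]
    have fin : ∀ q : ℕ, ∀ hq : q ≤ m + 1, t < q → q ≠ x →
        Function.update (Function.update (cfg m t x y) ⟨t, by omega⟩ (some ⟨t + 2, by omega⟩))
          ⟨q, by omega⟩ (some 1) = cfg m (t + 1) x q := by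
      intro q hq h1 h2
      funext k
      simp only [Function.update_apply, cfg, Fin.ext_iff]
      split_ifs <;> first | rfl | omega | (simp only [Option.some.injEq, Fin.mk.injEq]; omega)
    by_cases hyt : x = t + 1
    · refine ⟨x, t + 2, ?_, by omega, by omega, by omega, by omega, by omega, ?_⟩
      · simp only [mvpStep, e]
        rw [key (t + 2) (by omega) (by omega) (by omega) (by omega) (by omega), Option.map_some,
          fin (t + 2) (by omega) (by omega) (by omega)]
      · unfold G; split_ifs <;> omega
    · refine ⟨x, t + 1, ?_, by omega, by omega, by omega, by omega, by omega, ?_⟩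
      · simp only [mvpStep, e]
        rw [key (t + 1) (by omega) (by omega) (by omega) (by omega) (by omega), Option.map_some,
          fin (t + 1) (by omega) (by omega) (by omega)]
      · unfold G; split_ifs <;> omega
  · have e : cfg m t x y ⟨t, by omega⟩ = none := by
      have h1 : t ≠ x := fun h => hxt h.symm
      have h2 : t ≠ y := fun h => hyt h.symm
      simp [cfg, h1, h2]
    refine ⟨x, y, ?_, by omega, by omega, hx', hy', hxy, Iff.rfl⟩
    simp only [mvpStep, e, Option.some.injEq]
    funext k
    simp only [Function.update_apply, cfg, Fin.ext_iff]
    split_ifs <;> first | rfl | omega | (simp only [Option.some.injEq, Fin.mk.injEq]; omega)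

/-- The parity condition on preferences. -/
def G' (m a b : ℕ) : Prop := if a = b then (m + a) % 2 = 1 else G m a b

instance (m a b : ℕ) : Decidable (G' m a b) := by unfold G' G; infer_instance

theorem St_two (m : ℕ) (p : Fin (m + 2) → Fin (m + 2)) (ha : (p 0 : ℕ) ≤ m) :
    ∃ x y, St p 2 = some (cfg m 0 x y) ∧ x ≤ m + 1 ∧ y ≤ m + 1 ∧ x ≠ y ∧
      (G m x y ↔ G' m (p 0) (p 1)) := by
  have hb : (p 1 : ℕ) ≤ m + 1 := by omega
  have h1 : St p 1 = some (Function.update (fun _ => none) (p 0) (some 0)) := by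
    simp [St, mvpStep]
  have h2 : St p 2 = mvpStep (Function.update (fun _ => none) (p 0) (some 0)) 1 (p 1) := by
    rw [St, h1]; simp
  rw [h2]
  by_cases hab : p 0 = p 1
  · refine ⟨p 0 + 1, p 0, ?_, by omega, by omega, by omega, ?_⟩
    · have e : Function.update (fun _ => none) (p 0) (some (0 : Fin (m + 2))) (p 1) = some 0 := by
        simp [hab]
      simp only [mvpStep, e]
      rw [firstFree_eq (k := ⟨p 0 + 1, by omega⟩)]
      · simp only [Option.map_some, Option.some.injEq]
        funext k
        simp only [Function.update_apply, cfg, Fin.ext_iff, ← hab]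
        split_ifs <;> first | rfl | omega | (simp only [Option.some.injEq, Fin.mk.injEq]; omega)
      · rw [← hab, Fin.le_def]; simp
      · simp [Function.update_apply, Fin.ext_iff, ← hab]
      · intro j h3 h4
        rw [← hab, Fin.le_def] at h3
        rw [Fin.lt_def] at h4
        simp only at h4
        obtain rfl : j = p 0 := Fin.ext (by omega)
        simp [← hab]
    · rw [← hab]; simp only [G', G]; split_ifs <;> omega
  · have hab' : (p 0 : ℕ) ≠ p 1 := fun h => hab (Fin.ext h)
    refine ⟨p 0, p 1, ?_, by omega, by omega, hab', by simp [G', hab']⟩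
    have e : Function.update (fun _ => none) (p 0) (some (0 : Fin (m + 2))) (p 1) = none := by
      simp [Function.update_apply, Ne.symm hab]
    simp only [mvpStep, e, Option.some.injEq]
    funext k
    simp only [Function.update_apply, cfg, Fin.ext_iff]
    split_ifs <;> first | rfl | omega | (simp only [Option.some.injEq, Fin.mk.injEq]; omega)

theorem St_sweep (m : ℕ) (p : Fin (m + 2) → Fin (m + 2)) (ha : (p 0 : ℕ) ≤ m)
    (hp : ∀ c : Fin (m + 2), 2 ≤ (c : ℕ) → (p c : ℕ) = c - 2) (t : ℕ) (ht : t ≤ m) :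
    ∃ x y, St p (t + 2) = some (cfg m t x y) ∧ t ≤ x ∧ t ≤ y ∧ x ≤ m + 1 ∧ y ≤ m + 1 ∧ x ≠ y ∧
      (G m x y ↔ G' m (p 0) (p 1)) := by
  induction t with
  | zero =>
    obtain ⟨x, y, h⟩ := St_two m p ha
    exact ⟨x, y, h.1, by omega, by omega, h.2⟩
  | succ t ih =>
    obtain ⟨x, y, h1, h2, h3, h4, h5, h6, h7⟩ := ih (by omega)
    obtain ⟨x', y', g1, g2, g3, g4, g5, g6, g7⟩ := cfg_step m t x y (by omega) h2 h3 h4 h5 h6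
    refine ⟨x', y', ?_, g2, g3, g4, g5, g6, g7.trans h7⟩
    have hlt : t + 2 < m + 2 := by omega
    have e : p ⟨t + 2, hlt⟩ = ⟨t, by omega⟩ := Fin.ext (by rw [hp _ (by simp)]; simp)
    rw [show t + 1 + 2 = (t + 2) + 1 by ring, St, dif_pos hlt, h1, Option.bind_some, e, g1]

theorem outcome_iff_s12 (m : ℕ) (π : Equiv.Perm (Fin (m + 2)))
    (hπ : ∀ i : Fin (m + 2),
      (π i : ℕ) = if (i : ℕ) < m then (i : ℕ) + 2 else (i : ℕ) - m)
    (p : Fin (m + 2) → Fin (m + 2)) (ha : (p 0 : ℕ) ≤ m)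
    (hp : ∀ c : Fin (m + 2), 2 ≤ (c : ℕ) → (p c : ℕ) = c - 2) :
    MVPOutcome p π ↔ G' m (p 0) (p 1) := by
  obtain ⟨x, y, h1, h2, h3, h4, h5, h6, h7⟩ := St_sweep m p ha hp m le_rfl
  rw [← h7]
  unfold MVPOutcome
  rw [mvpRun_eq, h1]
  have hg : G m x y ↔ x = m := by unfold G; split_ifs <;> omega
  rw [hg]
  constructor
  · rintro ⟨occ, h, h'⟩
    simp only [Option.some.injEq] at h
    subst h
    have := h' ⟨m, by omega⟩
    have e0 : π ⟨m, by omega⟩ = 0 := Fin.ext (by rw [hπ]; simp)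
    rw [e0] at this
    by_contra hne
    have hne' : m ≠ x := fun h => hne h.symm
    have hy : m = y := by omega
    simp [cfg, hne', ← hy] at this
  · intro hx
    refine ⟨_, rfl, fun i => ?_⟩
    have := hπ i
    have hi := i.2
    unfold cfg
    split_ifs at this ⊢ <;> (try simp [Fin.ext_iff]) <;> omega

theorem isPF (m : ℕ) (p : Fin (m + 2) → Fin (m + 2)) (ha : (p 0 : ℕ) ≤ m)
    (hp : ∀ c : Fin (m + 2), 2 ≤ (c : ℕ) → (p c : ℕ) = c - 2) : IsParkingFunction p := by
  intro k
  have hk := k.2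
  let f : ℕ → Fin (m + 2) := fun i =>
    if h : i < m then ⟨i + 2, by omega⟩ else if i = m then 0 else 1
  have hf : ∀ i, (f i : ℕ) = if i < m then i + 2 else if i = m then 0 else 1 := by
    intro i; simp only [f]; split_ifs <;> simp
  have : (Finset.range (k + 1)).card ≤ (univ.filter fun i => p i ≤ k).card := by
    apply Finset.card_le_card_of_injOn f
    · intro i hi
      simp only [coe_range, Set.mem_Iio] at hi
      simp only [coe_filter, mem_univ, true_and, Set.mem_ofPred_eq, Fin.le_def]
      have h0 := hf i
      by_cases h : i < m
      · rw [if_pos h] at h0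
        rw [hp _ (by omega)]; omega
      · by_cases h' : i = m
        · have : f i = 0 := Fin.ext (by rw [h0]; simp [h'])
          rw [this]; omega
        · have := (p (f i)).2
          omega
    · intro i hi j hj hij
      simp only [coe_range, Set.mem_Iio] at hi hj
      have := congrArg Fin.val hij
      rw [hf, hf] at this
      split_ifs at this <;> omega
  simpa using this

theorem count (m : ℕ) :
    ((range (m + 1) ×ˢ range (m + 2)).filter fun q => G' m q.1 q.2).card
      = m + 1 + (m + 1) ^ 2 / 2 := by
  induction m using Nat.twoStepInduction with
  | zero => decide
  | one => decide
  | more m ih _ =>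
    have e : ((range (m + 2 + 1) ×ˢ range (m + 2 + 2)).filter fun q => G' (m + 2) q.1 q.2) =
      ((range (m + 1) ×ˢ range (m + 2)).filter fun q => G' m q.1 q.2) ∪
      ((range (m + 3) ×ˢ {m + 3}) ∪ (({m + 2} ×ˢ range (m + 2)) ∪ {(m + 1, m + 1)})) := by
      ext ⟨a, b⟩
      simp only [mem_filter, mem_product, mem_range, mem_union, mem_singleton, Prod.mk.injEq]
      simp only [G', G]
      split_ifs <;> omega
    rw [e, card_union_of_disjoint, card_union_of_disjoint, card_union_of_disjoint, ih]
    · simp only [card_product, card_range, card_singleton]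
      have : (m + 2 + 1) ^ 2 = (m + 1) ^ 2 + 2 * (2 * m + 4) := by ring
      rw [this]; omega
    all_goals
      rw [Finset.disjoint_left]
      rintro ⟨a, b⟩
      simp only [mem_filter, mem_product, mem_range, mem_union, mem_singleton, Prod.mk.injEq]
      omega

/-- `|Fib_{m+2}(τ_{m,2})| = m + 1 + ⌊(m+1)²/2⌋`, where `τ_{m,2}`
is the complete bipartite permutation `34⋯(m+2)12` (given here 0-indexed:
`π i = i + 2` for `i < m` and `π i = i - m` for `i ≥ m`). -/
theorem statement12 (m : ℕ) (π : Equiv.Perm (Fin (m + 2)))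
    (hπ : ∀ i : Fin (m + 2),
      (π i : ℕ) = if (i : ℕ) < m then (i : ℕ) + 2 else (i : ℕ) - m) :
    (FibMVP π).ncard = m + 1 + (m + 1) ^ 2 / 2 := by
  have hp : ∀ p : Fin (m + 2) → Fin (m + 2), MVPOutcome p π →
      (p 0 : ℕ) ≤ m ∧ ∀ c : Fin (m + 2), 2 ≤ (c : ℕ) → (p c : ℕ) = c - 2 := by
    intro p h
    have key : ∀ c : Fin (m + 2), (c : ℕ) ≤ π (p c) ∧ ∃ k : Fin (m + 2), (p c : ℕ) ≤ k ∧ (π k : ℕ) = c := by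
      intro c
      obtain ⟨h1, h2⟩ := outcome_inv h c
      exact ⟨h1, π.symm c, h2, by simp⟩
    constructor
    · obtain ⟨-, k, h1, h2⟩ := key 0
      rw [hπ] at h2
      simp at h2
      split_ifs at h2 <;> omega
    · intro c hc
      obtain ⟨h0, k, h1, h2⟩ := key c
      have := k.2
      rw [hπ] at h0 h2
      split_ifs at h0 h2 <;> omega
  rw [← count m, ← Set.ncard_coe_finset]
  rw [← Set.ncard_image_of_injOn (f := fun p : Fin (m + 2) → Fin (m + 2) =>
    ((p 0 : ℕ), (p 1 : ℕ))) (s := FibMVP π)]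
  · congr 1
    ext ⟨a, b⟩
    simp only [Set.mem_image, coe_filter, mem_product, mem_range, Set.mem_ofPred_eq, Prod.mk.injEq]
    constructor
    · rintro ⟨p, ⟨-, h⟩, rfl, rfl⟩
      obtain ⟨h1, h2⟩ := hp p h
      exact ⟨⟨by omega, by omega⟩, (outcome_iff_s12 m π hπ p h1 h2).1 h⟩
    · rintro ⟨⟨h1, h2⟩, h3⟩
      let p : Fin (m + 2) → Fin (m + 2) := fun c =>
        if (c : ℕ) = 0 then ⟨a, by omega⟩ else if (c : ℕ) = 1 then ⟨b, h2⟩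
        else ⟨c - 2, by omega⟩
      have e0 : (p 0 : ℕ) = a := by simp [p]
      have e1 : (p 1 : ℕ) = b := by simp [p]
      have e2 : ∀ c : Fin (m + 2), 2 ≤ (c : ℕ) → (p c : ℕ) = c - 2 := by
        intro c hc
        simp only [p]
        rw [if_neg (by omega), if_neg (by omega)]
      have e3 : (p 0 : ℕ) ≤ m := by omega
      refine ⟨p, ⟨isPF m p e3 e2, (outcome_iff_s12 m π hπ p e3 e2).2 ?_⟩, e0, e1⟩
      rw [e0, e1]; exact h3
  · intro p h q h' e
    obtain ⟨-, h2⟩ := hp p h.2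
    obtain ⟨-, g2⟩ := hp q h'.2
    simp only [Prod.mk.injEq] at e
    funext c
    by_cases hc : 2 ≤ (c : ℕ)
    · exact Fin.ext (by rw [h2 c hc, g2 c hc])
    · by_cases hc0 : (c : ℕ) = 0
      · obtain rfl : c = 0 := Fin.ext hc0
        exact Fin.ext e.1
      · obtain rfl : c = 1 := Fin.ext (by simp; omega)
        exact Fin.ext e.2

end MVPPaper
end

section
/- Fix m ≥ 1 and let m' = m+1. For a 1-subgraph S of the inversion graph of τ_{m,2}, let S' be the 1-subgraph of the inversion graph of τ_{m',2} obtained by increasing all vertex labels of S by one and inserting a new isolated vertex labelled 1. Then S ↦ S' is a bijection from the set of valid 1-subgraphs of the inversion graph of τ_{m,2} onto the set of valid 1-subgraphs of the inversion graph of τ_{m',2} in which the vertex 1 is incident to no edge. -/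
/- Common definitions: the classical and MVP parking processes, parking
functions, inversion graphs and 1-subgraphs, Motzkin paths, and sandpile
configurations on complete graphs. Spots, cars and vertices are 0-indexed
(element `i : Fin n` corresponds to the 1-indexed `i+1` of the paper). -/

namespace MVPPaper

open Finset

variable {n : ℕ}

/-- Extend an occupancy by a new first spot, relabelling the cars. -/
def extOcc {n : ℕ} (σ : Fin n → Fin (n + 1)) (x : Option (Fin (n + 1)))
    (occ : Fin n → Option (Fin n)) : Fin (n + 1) → Option (Fin (n + 1)) :=
  Fin.cons x (fun k => (occ k).map σ)

theorem extOcc_zero {n : ℕ} (σ : Fin n → Fin (n + 1)) (x) (occ : Fin n → Option (Fin n)) :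
    extOcc σ x occ 0 = x := rfl

theorem extOcc_succ {n : ℕ} (σ : Fin n → Fin (n + 1)) (x) (occ : Fin n → Option (Fin n))
    (k : Fin n) : extOcc σ x occ k.succ = (occ k).map σ := rfl

theorem extOcc_update {n : ℕ} (σ : Fin n → Fin (n + 1)) (x) (occ : Fin n → Option (Fin n))
    (k i : Fin n) : Function.update (extOcc σ x occ) k.succ (some (σ i)) =
      extOcc σ x (Function.update occ k (some i)) := by
  funext a
  refine Fin.cases ?_ (fun b => ?_) a
  · rw [Function.update_of_ne (Fin.succ_ne_zero k).symm]; rfl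
  · rw [extOcc_succ]
    by_cases h : b = k
    · subst h; simp
    · rw [Function.update_of_ne (by simpa using h), Function.update_of_ne h]; rfl

theorem firstFree_ext {n : ℕ} (σ : Fin n → Fin (n + 1)) (x) (occ : Fin n → Option (Fin n))
    (s : Fin n) : firstFree (extOcc σ x occ) s.succ = (firstFree occ s).map Fin.succ := by
  unfold firstFree
  rw [List.finRange_succ, List.find?_cons_of_neg (by simp), List.find?_map]
  congr 2
  funext k
  simp [extOcc_succ, Function.comp]

theorem mvpStep_ext {n : ℕ} (σ : Fin n → Fin (n + 1)) (x) (occ : Fin n → Option (Fin n))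
    (i s : Fin n) : mvpStep (extOcc σ x occ) (σ i) s.succ =
      (mvpStep occ i s).map (extOcc σ x) := by
  unfold mvpStep
  rw [extOcc_succ]
  cases h : occ s with
  | none => simp [extOcc_update]
  | some j =>
    simp only [Option.map_some, extOcc_update, firstFree_ext, Option.map_map]
    congr 1
    funext k
    simp [extOcc_update]

theorem foldlM_ext {n : ℕ} (σ : Fin n → Fin (n + 1)) (x) (p : Fin n → Fin n)
    (p' : Fin (n + 1) → Fin (n + 1)) (hp : ∀ c, p' (σ c) = (p c).succ)
    (L : List (Fin n)) (occ : Fin n → Option (Fin n)) :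
    List.foldlM (fun occ i => mvpStep occ i (p' i)) (extOcc σ x occ) (L.map σ) =
      (List.foldlM (fun occ i => mvpStep occ i (p i)) occ L).map (extOcc σ x) := by
  induction L generalizing occ with
  | nil => rfl
  | cons a L ih =>
    simp only [List.map_cons, List.foldlM_cons, hp, mvpStep_ext]
    cases mvpStep occ a (p a) with
    | none => rfl
    | some o => exact ih o

theorem mvpRun_ext {m : ℕ} (p : Fin (m + 2) → Fin (m + 2))
    (p' : Fin (m + 2 + 1) → Fin (m + 2 + 1))
    (hp : ∀ c, p' (Fin.succAbove 2 c) = (p c).succ) (h2 : p' 2 = 0) :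
    mvpRun p' = (mvpRun p).map (extOcc (Fin.succAbove 2) (some 2)) := by
  have hL : List.finRange (m + 2 + 1) = ([0, 1] : List (Fin (m + 2))).map (Fin.succAbove 2) ++
      2 :: ((List.finRange m).map (fun k => k.succ.succ)).map (Fin.succAbove 2) := by
    rw [List.finRange_succ, List.finRange_succ, List.finRange_succ]
    simp only [List.map_cons, List.map_map, List.map_nil, List.cons_append, List.nil_append]
    refine congrArg₂ _ ?_ (congrArg₂ _ ?_ (congrArg₂ _ ?_ (List.map_congr_left ?_)))
    · rfl
    · rfl
    · rfl
    · intro k _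
      simp only [Function.comp]
      rw [Fin.succAbove_of_le_castSucc]
      show 2 % (m + 2 + 1) ≤ (k : ℕ) + 1 + 1
      rw [Nat.mod_eq_of_lt (by omega)]; omega
  have hL2 : List.finRange (m + 2) = ([0, 1] : List (Fin (m + 2))) ++
      (List.finRange m).map (fun k => k.succ.succ) := by
    rw [List.finRange_succ, List.finRange_succ]
    simp [Function.comp_def]
  have h0 : (fun _ => none : Fin (m + 2 + 1) → Option (Fin (m + 2 + 1))) =
      extOcc (Fin.succAbove 2) none (fun _ => none) := by
    funext a
    exact Fin.cases rfl (fun _ => rfl) a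
  unfold mvpRun runProcess
  rw [hL, hL2, h0, List.foldlM_append, List.foldlM_append, foldlM_ext _ _ p p' hp]
  cases List.foldlM (fun occ i => mvpStep occ i (p i)) (fun _ => none)
    ([0, 1] : List (Fin (m + 2))) with
  | none => rfl
  | some o =>
    have hs : mvpStep (extOcc (Fin.succAbove 2) none o) (2 : Fin (m + 2 + 1)) 0 =
        some (extOcc (Fin.succAbove 2) (some 2) o) := by
      unfold mvpStep
      rw [extOcc_zero]
      simp only [Option.some.injEq]
      funext a
      refine Fin.cases ?_ (fun b => ?_) a
      · simp [extOcc_zero]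
      · simp [extOcc_succ]
    simp only [Option.map_some, Option.bind_eq_bind, Option.bind_some, List.foldlM_cons, h2, hs]
    exact foldlM_ext _ _ p p' hp _ _

theorem outcome_ext {m : ℕ} (p : Fin (m + 2) → Fin (m + 2))
    (p' : Fin (m + 2 + 1) → Fin (m + 2 + 1))
    (hp : ∀ c, p' (Fin.succAbove 2 c) = (p c).succ) (h2 : p' 2 = 0)
    (π : Equiv.Perm (Fin (m + 2))) (π' : Equiv.Perm (Fin (m + 2 + 1)))
    (e0 : π' 0 = 2) (es : ∀ i, π' i.succ = Fin.succAbove 2 (π i)) :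
    MVPOutcome p' π' ↔ MVPOutcome p π := by
  unfold MVPOutcome
  rw [mvpRun_ext p p' hp h2]
  constructor
  · rintro ⟨o', h, ho⟩
    obtain ⟨o, h1, rfl⟩ := Option.map_eq_some_iff.1 h
    refine ⟨o, h1, fun i => ?_⟩
    have := ho i.succ
    rw [extOcc_succ, es, ← Option.map_some] at this
    exact Option.map_injective Fin.succAbove_right_injective this
  · rintro ⟨o, h, ho⟩
    refine ⟨_, by rw [h]; rfl, fun i => ?_⟩
    refine Fin.cases ?_ (fun b => ?_) i
    · rw [extOcc_zero, e0]
    · rw [extOcc_succ, es, ho]; rfl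

theorem mem_shift {n : ℕ} (S : Finset (Fin n × Fin n)) (a b : Fin n) :
    (a.succ, b.succ) ∈ S.image (fun e => (e.1.succ, e.2.succ)) ↔ (a, b) ∈ S := by
  simp

theorem oneSub_ext {m : ℕ} (S : Finset (Fin (m + 2) × Fin (m + 2)))
    (π : Equiv.Perm (Fin (m + 2))) (π' : Equiv.Perm (Fin (m + 2 + 1)))
    (es : ∀ i, π' i.succ = Fin.succAbove 2 (π i)) :
    IsOneSubgraph π' (S.image (fun e => (e.1.succ, e.2.succ))) ↔ IsOneSubgraph π S := by
  unfold IsOneSubgraph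
  have hlt : ∀ a b, π' a.succ < π' b.succ ↔ π a < π b := fun a b => by
    rw [es, es, Fin.succAbove_lt_succAbove_iff]
  constructor
  · rintro ⟨h1, h2⟩
    refine ⟨fun e he => ?_, fun i j j' hj hj' => ?_⟩
    · have := h1 ((mem_shift S e.1 e.2).2 he)
      simpa [invFinset, hlt] using this
    · exact Fin.succ_injective _ (h2 _ _ _ ((mem_shift S _ _).2 hj) ((mem_shift S _ _).2 hj'))
  · rintro ⟨h1, h2⟩
    refine ⟨fun e he => ?_, fun i j j' hj hj' => ?_⟩
    · obtain ⟨f, hf, rfl⟩ := Finset.mem_image.1 he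
      have := h1 hf
      simpa [invFinset, hlt] using this
    · obtain ⟨f, hf, e1⟩ := Finset.mem_image.1 hj
      obtain ⟨g, hg, e2⟩ := Finset.mem_image.1 hj'
      obtain ⟨f1, f2⟩ := f
      obtain ⟨g1, g2⟩ := g
      simp only [Prod.mk.injEq] at e1 e2
      obtain ⟨rfl, rfl⟩ := e1
      obtain ⟨rfl, e2⟩ := e2
      obtain rfl := Fin.succ_injective _ e2
      rw [h2 _ _ _ hf hg]

theorem valid_ext {m : ℕ} (S : Finset (Fin (m + 2) × Fin (m + 2)))
    (π : Equiv.Perm (Fin (m + 2))) (π' : Equiv.Perm (Fin (m + 2 + 1)))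
    (e0 : π' 0 = 2) (es : ∀ i, π' i.succ = Fin.succAbove 2 (π i)) (hS : IsOneSubgraph π S) :
    IsValid π' (S.image (fun e => (e.1.succ, e.2.succ))) ↔ IsValid π S := by
  unfold IsValid
  refine outcome_ext _ _ (fun c => ?_) ?_ π π' e0 es
  · have hs : π'.symm (Fin.succAbove 2 c) = (π.symm c).succ := by
      rw [Equiv.symm_apply_eq, es, Equiv.apply_symm_apply]
    unfold subToPF
    rw [hs]
    by_cases h : ∃ j, (j, π.symm c) ∈ S
    · have h' : ∃ j, (j, (π.symm c).succ) ∈ S.image (fun e => (e.1.succ, e.2.succ)) :=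
        ⟨_, (mem_shift S _ _).2 h.choose_spec⟩
      rw [dif_pos h, dif_pos h']
      exact ((oneSub_ext S π π' es).2 hS).2 _ _ _ h'.choose_spec
        ((mem_shift S _ _).2 h.choose_spec)
    · rw [dif_neg h, dif_neg]
      rintro ⟨j, hj⟩
      obtain ⟨f, hf, e1⟩ := Finset.mem_image.1 hj
      simp only [Prod.mk.injEq] at e1
      exact h ⟨f.1, by rw [← Fin.succ_injective _ e1.2]; exact hf⟩
  · have hs : π'.symm 2 = 0 := by rw [Equiv.symm_apply_eq, e0]
    unfold subToPF
    rw [hs, dif_neg]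
    rintro ⟨j, hj⟩
    obtain ⟨f, hf, e1⟩ := Finset.mem_image.1 hj
    simp only [Prod.mk.injEq] at e1
    exact Fin.succ_ne_zero _ e1.2

/-- shifting all vertex labels up by one (inserting a new
isolated vertex labelled `0`, i.e. the 1-indexed vertex `1`) is a bijection
from the valid 1-subgraphs for `τ_{m,2}` onto the valid 1-subgraphs for
`τ_{m+1,2}` in which the first vertex is isolated. -/
theorem statement13 (m : ℕ) (hm : 1 ≤ m)
    (π : Equiv.Perm (Fin (m + 2))) (π' : Equiv.Perm (Fin (m + 2 + 1)))
    (hπ : ∀ i : Fin (m + 2),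
      (π i : ℕ) = if (i : ℕ) < m then (i : ℕ) + 2 else (i : ℕ) - m)
    (hπ' : ∀ i : Fin (m + 2 + 1),
      (π' i : ℕ) = if (i : ℕ) < m + 1 then (i : ℕ) + 2 else (i : ℕ) - (m + 1)) :
    Set.BijOn
      (fun S : Finset (Fin (m + 2) × Fin (m + 2)) =>
        S.image fun e => (e.1.succ, e.2.succ))
      {S : Finset (Fin (m + 2) × Fin (m + 2)) | IsOneSubgraph π S ∧ IsValid π S}
      {S' : Finset (Fin (m + 2 + 1) × Fin (m + 2 + 1)) |
        IsOneSubgraph π' S' ∧ IsValid π' S' ∧ ∀ e ∈ S', e.1 ≠ 0 ∧ e.2 ≠ 0} := by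
  have e0 : π' 0 = 2 := by
    apply Fin.ext
    rw [hπ']
    show _ = 2 % (m + 2 + 1)
    rw [Nat.mod_eq_of_lt (by omega)]; simp
  have es : ∀ i, π' i.succ = Fin.succAbove 2 (π i) := by
    intro i
    apply Fin.ext
    have h2 : ((2 : Fin (m + 2 + 1)) : ℕ) = 2 := rfl
    have h := hπ i
    rw [hπ', Fin.succAbove]
    simp only [Fin.lt_def, h2, Fin.val_castSucc, Fin.val_succ]
    have hi := i.isLt
    split_ifs at h ⊢ <;> simp only [Fin.val_castSucc, Fin.val_succ] <;> omega
  refine ⟨?_, ?_, ?_⟩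
  · rintro S ⟨h1, h2⟩
    refine ⟨(oneSub_ext S π π' es).2 h1, (valid_ext S π π' e0 es h1).2 h2, fun e he => ?_⟩
    obtain ⟨f, hf, rfl⟩ := Finset.mem_image.1 he
    exact ⟨Fin.succ_ne_zero _, Fin.succ_ne_zero _⟩
  · intro S _ T _ h
    ext ⟨a, b⟩
    rw [← mem_shift S, ← mem_shift T]
    exact Finset.ext_iff.1 h _
  · rintro S' ⟨h1, h2, h3⟩
    let S : Finset (Fin (m + 2) × Fin (m + 2)) :=
      Finset.univ.filter fun e => (e.1.succ, e.2.succ) ∈ S'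
    have hS : S.image (fun e => (e.1.succ, e.2.succ)) = S' := by
      ext e
      constructor
      · intro he
        obtain ⟨f, hf, rfl⟩ := Finset.mem_image.1 he
        exact (Finset.mem_filter.1 hf).2
      · intro he
        obtain ⟨a, b⟩ := e
        obtain ⟨ha, hb⟩ := h3 _ he
        obtain ⟨a, rfl⟩ := Fin.exists_succ_eq.2 ha
        obtain ⟨b, rfl⟩ := Fin.exists_succ_eq.2 hb
        rw [mem_shift]
        exact Finset.mem_filter.2 ⟨Finset.mem_univ _, he⟩
    rw [← hS] at h1 h2
    have h1' := (oneSub_ext S π π' es).1 h1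
    exact ⟨S, ⟨h1', (valid_ext S π π' e0 es h1').1 h2⟩, hS⟩
end MVPPaper
end

section
/- Fix m ≥ 1 and consider the complete bipartite permutation τ_{m,2} ∈ S_{m+2}. The 1-subgraph S of its inversion graph consisting of exactly the two edges (1, m+1) and (1, m+2) is valid if and only if m is odd. -/
/- Common definitions: the classical and MVP parking processes, parking
functions, inversion graphs and 1-subgraphs, Motzkin paths, and sandpile
configurations on complete graphs. Spots, cars and vertices are 0-indexed
(element `i : Fin n` corresponds to the 1-indexed `i+1` of the paper). -/

namespace MVPPaper

open Finset

variable {n : ℕ}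

theorem firstFree_eq_of (occ : Fin n → Option (Fin n)) (s k : Fin n) (hsk : s ≤ k)
    (hk : occ k = none) (h : ∀ j, s ≤ j → j < k → occ j ≠ none) :
    firstFree occ s = some k := by
  unfold firstFree
  rw [List.find?_eq_some_iff_getElem]
  refine ⟨by simp [hsk, hk], k.1, by simp, by simp, ?_⟩
  intro j hj
  have hjn : j < n := lt_trans hj k.2
  simp only [List.getElem_finRange, Fin.cast_mk]
  by_cases hs : s ≤ ⟨j, hjn⟩
  · have := h ⟨j, hjn⟩ hs hj
    cases hh : occ ⟨j, hjn⟩ with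
    | none => exact absurd hh this
    | some a => simp
  · simp [hs]

/-- state after `k` cars -/
def st (m k : ℕ) : Fin (m + 2) → Option (Fin (m + 2)) := fun i =>
  if h : i.1 + 2 < k then (if h' : i.1 + 2 < m + 2 then some ⟨i.1 + 2, h'⟩ else none)
  else if i.1 + 2 = k then some ⟨(k + 1) % 2, by omega⟩
  else if i.1 + 1 = k then (if k = 1 then some ⟨0, by omega⟩ else some ⟨k % 2, by omega⟩)
  else none

theorem st_step (m k : ℕ) (hk : k < m + 2) (s : Fin (m + 2)) (hs : s.1 = k - 2) :
    mvpStep (st m k) ⟨k, hk⟩ s = some (st m (k + 1)) := by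
  unfold mvpStep
  rcases Nat.eq_zero_or_pos k with h0 | hpos
  · subst h0
    have e : st m 0 s = none := by simp [st]
    rw [e]
    simp only [Option.some.injEq]
    funext i
    by_cases hi : i = s
    · subst hi; simp [st, hs]
    · have : i.1 ≠ 0 := fun h => hi (Fin.ext (by omega))
      rw [Function.update_of_ne hi]
      simp [st, this]
  · have e : st m k s = some ⟨if k = 1 then 0 else (k + 1) % 2, by split <;> omega⟩ := by
      unfold st
      by_cases h1 : k = 1
      · subst h1; simp [hs]
      · have : s.1 + 2 = k := by omega
        simp [this, h1]
    rw [e]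
    simp only
    have hsk : s < ⟨k, hk⟩ := by rw [Fin.lt_def]; simp only; omega
    rw [firstFree_eq_of _ s ⟨k, hk⟩ hsk.le]
    · simp only [Option.map_some, Option.some.injEq]
      funext i
      by_cases hik : i = ⟨k, hk⟩
      · subst hik
        rw [Function.update_self]
        unfold st
        by_cases h1 : k = 1
        · subst h1; simp
        · simp [h1]; omega
      · have hik' : i.1 ≠ k := fun h => hik (Fin.ext h)
        rw [Function.update_of_ne hik]
        by_cases hi : i = s
        · subst hi
          rw [Function.update_self]
          unfold st
          by_cases h1 : k = 1
          · subst h1; simp [hs]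
          · have h2 : i.1 + 2 = k := by omega
            simp [h2, hk]
        · have hi' : i.1 ≠ s.1 := fun h => hi (Fin.ext h)
          rw [Function.update_of_ne hi]
          unfold st
          grind
    · rw [Function.update_of_ne hsk.ne']
      simp [st]
    · intro j h1 h2
      rw [Fin.le_def] at h1
      rw [Fin.lt_def] at h2
      by_cases hj : j = s
      · subst hj; simp
      · have hj' : j.1 ≠ s.1 := fun h => hj (Fin.ext h)
        rw [Function.update_of_ne hj]
        unfold st
        simp only at h2
        grind

theorem st_run (m : ℕ) (p : Fin (m + 2) → Fin (m + 2)) (hp : ∀ c, (p c).1 = c.1 - 2) :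
    mvpRun p = some (st m (m + 2)) := by
  unfold mvpRun runProcess
  have key : ∀ k, k ≤ m + 2 → List.foldlM (fun occ i => mvpStep occ i (p i)) (fun _ => none)
      ((List.finRange (m + 2)).take k) = some (st m k) := by
    intro k
    induction k with
    | zero =>
      intro _
      simp only [List.take_zero, List.foldlM_nil]
      show some _ = some _
      congr 1
    | succ k ih =>
      intro hk
      rw [List.take_succ_eq_append_getElem (by simp only [List.length_finRange]; omega), List.foldlM_append, ih (by omega)]
      have := st_step m k (by omega) (p ⟨k, by omega⟩) (hp _)
      simpa using this
  have := key (m + 2) le_rfl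
  rwa [List.take_of_length_le (by simp)] at this

/-- the 1-subgraph of the inversion graph of `τ_{m,2}` with the
two edges `(1, m+1)` and `(1, m+2)` (0-indexed: `(0, m)` and `(0, m+1)`) is
valid iff `m` is odd. -/
theorem statement16 (m : ℕ) (hm : 1 ≤ m) (π : Equiv.Perm (Fin (m + 2)))
    (hπ : ∀ i : Fin (m + 2),
      (π i : ℕ) = if (i : ℕ) < m then (i : ℕ) + 2 else (i : ℕ) - m) :
    (IsValid π
      ({((⟨0, by omega⟩ : Fin (m + 2)), (⟨m, by omega⟩ : Fin (m + 2))),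
        ((⟨0, by omega⟩ : Fin (m + 2)), (⟨m + 1, by omega⟩ : Fin (m + 2)))} :
        Finset (Fin (m + 2) × Fin (m + 2))) ↔ Odd m) := by
  have hp : ∀ c, (subToPF π
      ({((⟨0, by omega⟩ : Fin (m + 2)), (⟨m, by omega⟩ : Fin (m + 2))),
        ((⟨0, by omega⟩ : Fin (m + 2)), (⟨m + 1, by omega⟩ : Fin (m + 2)))} :
        Finset (Fin (m + 2) × Fin (m + 2))) c).1 = c.1 - 2 := by
    intro c
    have hc := hπ (π.symm c)
    rw [Equiv.apply_symm_apply] at hc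
    have hlt := (π.symm c).2
    unfold subToPF
    split
    · rename_i h
      have h2 := h.choose_spec
      generalize h.choose = z at h2 ⊢
      simp only [Finset.mem_insert, Finset.mem_singleton, Prod.mk.injEq, Fin.ext_iff] at h2
      split at hc <;> omega
    · rename_i h
      have h3 : (π.symm c).1 < m := by
        by_contra hcon
        apply h
        refine ⟨⟨0, by omega⟩, ?_⟩
        simp only [Finset.mem_insert, Finset.mem_singleton, Prod.mk.injEq, Fin.ext_iff, true_and]
        omega
      rw [if_pos h3] at hc
      omega
  unfold IsValid MVPOutcome
  rw [st_run m _ hp]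
  constructor
  · rintro ⟨occ, h, h'⟩
    simp only [Option.some.injEq] at h
    subst h
    have h1 := h' ⟨m, by omega⟩
    have h2 := hπ ⟨m, by omega⟩
    simp only [lt_irrefl, if_false, Nat.sub_self] at h2
    simp [st, Fin.ext_iff, h2] at h1
    rw [Nat.odd_iff]
    omega
  · intro ho
    rw [Nat.odd_iff] at ho
    refine ⟨_, rfl, fun i => ?_⟩
    have h2 := hπ i
    have h3 := i.2
    unfold st
    by_cases him : i.1 < m
    · rw [if_pos him] at h2
      simp [him, Fin.ext_iff, h2]
    · rw [if_neg him] at h2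
      by_cases h4 : i.1 = m
      · simp [h4, Fin.ext_iff, h2]
        omega
      · have h5 : i.1 = m + 1 := by omega
        simp [h5, Fin.ext_iff, h2]
        omega

end MVPPaper
end

section
/- Let c = (c_1,…,c_n) be a stable sandpile configuration on the complete graph K_n. Then c is recurrent (satisfies Dhar's burning criterion) if and only if the n-complement p = (n − c_1,…, n − c_n) is a parking function. Hence c ↦ n − c is a bijection from the set of recurrent configurations on K_n onto the set of parking functions of length n. -/
/- Common definitions: the classical and MVP parking processes, parking
functions, inversion graphs and 1-subgraphs, Motzkin paths, and sandpile
configurations on complete graphs. Spots, cars and vertices are 0-indexed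
(element `i : Fin n` corresponds to the 1-indexed `i+1` of the paper). -/

namespace MVPPaper

open Finset

variable {n : ℕ}

theorem parking_iff_aux {n : ℕ} (p : Fin n → Fin n) :
    IsParkingFunction p ↔ ∃ v : Equiv.Perm (Fin n), ∀ k, p (v k) ≤ k := by
  constructor
  · intro h
    refine ⟨Tuple.sort p, fun k => ?_⟩
    by_contra hk
    rw [not_le] at hk
    have hm := Tuple.monotone_sort p
    have h1 := h k
    have h2 : (univ.filter fun i => p i ≤ k) ⊆ (Finset.Iio k).image (Tuple.sort p) := by
      intro i hi
      rw [Finset.mem_filter] at hi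
      rw [Finset.mem_image]
      refine ⟨(Tuple.sort p).symm i, ?_, by simp⟩
      rw [Finset.mem_Iio]
      by_contra hlt
      rw [not_lt] at hlt
      have h3 := hm hlt
      simp only [Function.comp_apply, Equiv.apply_symm_apply] at h3
      exact absurd (lt_of_lt_of_le hk h3) (not_lt.mpr hi.2)
    have h4 := (Finset.card_le_card h2).trans Finset.card_image_le
    rw [Fin.card_Iio] at h4
    omega
  · rintro ⟨v, hv⟩ k
    have h2 : (Finset.Iic k).image v ⊆ (univ.filter fun i => p i ≤ k) := by
      intro i hi
      rw [Finset.mem_image] at hi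
      obtain ⟨j, hj, rfl⟩ := hi
      rw [Finset.mem_Iic] at hj
      simpa using (hv j).trans hj
    have h4 := Finset.card_le_card h2
    rw [Finset.card_image_of_injective _ v.injective, Fin.card_Iic] at h4
    exact h4

theorem recurrent_iff_aux {n : ℕ} (c : Fin n → ℕ) (hc : ∀ i, c i < n)
    (q : Fin n → Fin n) (hq : ∀ i, (q i : ℕ) = n - 1 - c i) :
    IsRecurrentK c ↔ IsParkingFunction q := by
  rw [parking_iff_aux]
  unfold IsRecurrentK
  simp only [hc, implies_true, true_and, Fin.le_def, hq]
  refine exists_congr fun v => forall_congr' fun k => ?_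
  have := hc (v k)
  omega

/-- a stable configuration `c` on `K_n` is recurrent iff its
`n`-complement (0-indexed: `i ↦ n - 1 - c i`) is a parking function; hence
`c ↦ n - c` is a bijection from recurrent configurations onto parking
functions of length `n`. -/
theorem statement17 (n : ℕ) :
    (∀ c : Fin n → ℕ, (∀ i, c i < n) →
      (IsRecurrentK c ↔
        IsParkingFunction
          (fun i : Fin n => (⟨n - 1 - c i, by have := i.isLt; omega⟩ : Fin n)))) ∧
    Set.BijOn
      (fun (c : Fin n → ℕ) (i : Fin n) =>
        (⟨n - 1 - c i, by have := i.isLt; omega⟩ : Fin n))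
      {c : Fin n → ℕ | IsRecurrentK c}
      {p : Fin n → Fin n | IsParkingFunction p} := by
  refine ⟨fun c hc => recurrent_iff_aux c hc _ fun _ => rfl,
    fun c hc => (recurrent_iff_aux c hc.1 _ fun _ => rfl).1 hc, ?_, ?_⟩
  · intro c hc d hd h
    funext i
    have h1 := congrArg Fin.val (congrFun h i)
    have h2 := hc.1 i
    have h3 := hd.1 i
    simp only at h1
    omega
  · intro p hp
    have hlt : ∀ i, n - 1 - (p i : ℕ) < n := fun i => by have := i.isLt; omega
    have he : (fun i : Fin n =>
        (⟨n - 1 - (n - 1 - (p i : ℕ)), by have := i.isLt; omega⟩ : Fin n)) = p := by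
      funext i
      apply Fin.ext
      have := (p i).isLt
      simp only
      omega
    refine ⟨fun i => n - 1 - (p i : ℕ), ?_, he⟩
    exact (recurrent_iff_aux _ hlt p fun i => by have := (p i).isLt; omega).2 hp

end MVPPaper
end
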